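/- arXiv:2311.09203 — 4 statements merged into one kernel-verified Lean document; each statement's English description precedes it below -/
import Mathlib

section
/- Let γ>0 and let p,q≥0 be integers with γ+2−q>0. Define h_{γ,p,q}(τ,σ) := ∂^{p+q}/∂τ^p∂σ^q [∑_{k≥1} k^γ·log(1+e^{σ−kτ})]. Then for every fixed ρ∈ℝ, as r→0⁺ one has h_{γ,p,q}(r,ρ) = (−1)^{p+1}·Li_{γ+2−q}(−e^ρ)·Γ(γ+p+1)·r^{−(γ+p+1)} + O(r^{−1/2}). -/
open Real Filter Asymptotics

/-- `h_{γ,p,q}(τ,σ) = ∂^{p+q}/∂τ^p∂σ^q [∑_{k≥1} k^γ log(1+e^{σ−kτ})]` -/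
noncomputable def hfun (γ : ℝ) (p q : ℕ) (τ σ : ℝ) : ℝ :=
  iteratedDeriv p (fun τ' : ℝ => iteratedDeriv q
    (fun σ' : ℝ => ∑' k : ℕ, (k : ℝ) ^ γ * Real.log (1 + Real.exp (σ' - k * τ'))) σ) τ

/-- `Li_ν(−x)` for `ν > 0`, `x > 0`, via the Fermi–Dirac integral
`Li_ν(−x) = −(1/Γ(ν)) ∫₀^∞ t^{ν−1}/(e^t/x + 1) dt`. -/
noncomputable def negLi (ν x : ℝ) : ℝ :=
  -(1 / Real.Gamma ν) * ∫ t in Set.Ioi (0:ℝ), t ^ (ν - 1) / (Real.exp t / x + 1)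

section Aux

open MeasureTheory Set Topology Filter

/-- exponential bound on the half line, with continuity -/
def HfExpB (g : ℝ → ℝ) : Prop :=
  Continuous g ∧ ∃ C c : ℝ, 0 < c ∧ 0 ≤ C ∧ ∀ x, 0 ≤ x → |g x| ≤ C * Real.exp (-c * x)

/-- `n` derivatives with exponential bounds on the half line -/
def HfNice : ℕ → (ℝ → ℝ) → Prop
  | 0, g => HfExpB g
  | n + 1, g => HfExpB g ∧ ∃ g' : ℝ → ℝ, (∀ x, HasDerivAt g (g' x) x) ∧ HfNice n g'

lemma HfExpB.add {f g : ℝ → ℝ} (hf : HfExpB f) (hg : HfExpB g) : HfExpB (fun x => f x + g x) := by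
  obtain ⟨hf0, C, c, hc, hC, hf⟩ := hf
  obtain ⟨hg0, D, d, hd, hD, hg⟩ := hg
  refine ⟨hf0.add hg0, C + D, min c d, lt_min hc hd, by positivity, fun x hx => ?_⟩
  have h1 : Real.exp (-c * x) ≤ Real.exp (-(min c d) * x) := by
    apply Real.exp_le_exp.2
    nlinarith [min_le_left c d]
  have h2 : Real.exp (-d * x) ≤ Real.exp (-(min c d) * x) := by
    apply Real.exp_le_exp.2
    nlinarith [min_le_right c d]
  calc |f x + g x| ≤ |f x| + |g x| := abs_add_le _ _
    _ ≤ C * Real.exp (-c * x) + D * Real.exp (-d * x) := add_le_add (hf x hx) (hg x hx)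
    _ ≤ C * Real.exp (-(min c d) * x) + D * Real.exp (-(min c d) * x) := by gcongr
    _ = _ := by ring

lemma HfExpB.const_mul {f : ℝ → ℝ} (a : ℝ) (hf : HfExpB f) : HfExpB (fun x => a * f x) := by
  obtain ⟨hf0, C, c, hc, hC, hf⟩ := hf
  refine ⟨by fun_prop, |a| * C, c, hc, by positivity, fun x hx => ?_⟩
  rw [abs_mul, mul_assoc]
  gcongr
  exact hf x hx

lemma HfExpB.x_mul {f : ℝ → ℝ} (hf : HfExpB f) : HfExpB (fun x => x * f x) := by
  obtain ⟨hf0, C, c, hc, hC, hf⟩ := hf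
  refine ⟨by fun_prop, C * (2 / c), c / 2, by positivity, by positivity, fun x hx => ?_⟩
  have h1 : x ≤ (2 / c) * Real.exp (c / 2 * x) := by
    have := Real.add_one_le_exp (c / 2 * x)
    calc x = (2 / c) * (c / 2 * x) := by field_simp
      _ ≤ _ := by gcongr; linarith
  have h2 : Real.exp (-c * x) = Real.exp (-(c/2) * x) * Real.exp (-(c/2) * x) := by
    rw [← Real.exp_add]; congr 1; ring
  have h3 : Real.exp (c / 2 * x) * Real.exp (-(c/2) * x) = 1 := by
    rw [← Real.exp_add]; simp
  rw [abs_mul, abs_of_nonneg hx]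
  calc x * |f x| ≤ ((2 / c) * Real.exp (c / 2 * x)) * (C * Real.exp (-c * x)) :=
        mul_le_mul h1 (hf x hx) (abs_nonneg _) (by positivity)
    _ = C * (2 / c) * Real.exp (-(c/2) * x) * (Real.exp (c / 2 * x) * Real.exp (-(c/2) * x)) := by
        rw [h2]; ring
    _ = _ := by rw [h3, mul_one]

lemma HfNice.expB {n : ℕ} {g : ℝ → ℝ} (h : HfNice n g) : HfExpB g := by
  cases n with
  | zero => exact h
  | succ n => exact h.1

lemma HfNice.of_succ {n : ℕ} {g : ℝ → ℝ} (h : HfNice (n + 1) g) : HfNice n g := by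
  induction n generalizing g with
  | zero => exact h.1
  | succ n ih =>
    obtain ⟨h1, g', h2, h3⟩ := h
    exact ⟨h1, g', h2, ih h3⟩

lemma HfNice.add {n : ℕ} {f g : ℝ → ℝ} (hf : HfNice n f) (hg : HfNice n g) :
    HfNice n (fun x => f x + g x) := by
  induction n generalizing f g with
  | zero => exact HfExpB.add hf hg
  | succ n ih =>
    obtain ⟨h1, f', h2, h3⟩ := hf
    obtain ⟨k1, g', k2, k3⟩ := hg
    exact ⟨h1.add k1, fun x => f' x + g' x, fun x => (h2 x).add (k2 x), ih h3 k3⟩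

lemma HfNice.const_mul {n : ℕ} {f : ℝ → ℝ} (a : ℝ) (hf : HfNice n f) :
    HfNice n (fun x => a * f x) := by
  induction n generalizing f with
  | zero => exact HfExpB.const_mul a hf
  | succ n ih =>
    obtain ⟨h1, f', h2, h3⟩ := hf
    exact ⟨h1.const_mul a, fun x => a * f' x, fun x => (h2 x).const_mul a, ih h3⟩

lemma HfNice.x_mul {n : ℕ} {f : ℝ → ℝ} (hf : HfNice n f) : HfNice n (fun x => x * f x) := by
  induction n generalizing f with
  | zero => exact HfExpB.x_mul hf
  | succ n ih =>
    have hf' := hf.of_succ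
    obtain ⟨h1, f', h2, h3⟩ := hf
    refine ⟨h1.x_mul, fun x => f x + x * f' x, fun x => ?_, hf'.add (ih h3)⟩
    have h := (hasDerivAt_id x).mul (h2 x)
    rw [one_mul] at h
    exact h

lemma HfExpB.integrableOn {g : ℝ → ℝ} (hg : HfExpB g) {a : ℝ} (ha : -1 < a) :
    IntegrableOn (fun x => x ^ a * g x) (Ioi 0) := by
  obtain ⟨hg0, C, c, hc, hC, hb⟩ := hg
  have h := (integrableOn_rpow_mul_exp_neg_mul_rpow ha one_pos hc).const_mul C
  refine Integrable.mono' h ?_ ?_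
  · apply ContinuousOn.aestronglyMeasurable _ measurableSet_Ioi
    apply ContinuousOn.mul _ hg0.continuousOn
    exact fun x hx => (Real.continuousAt_rpow_const _ _ (Or.inl hx.ne')).continuousWithinAt
  · refine (ae_restrict_iff' measurableSet_Ioi).2 (ae_of_all _ fun x (hx : 0 < x) => ?_)
    rw [norm_mul, Real.norm_eq_abs, Real.norm_eq_abs, abs_of_nonneg (by positivity), Real.rpow_one]
    calc x ^ a * |g x| ≤ x ^ a * (C * Real.exp (-c * x)) := by gcongr; exact hb x hx.le
      _ = _ := by ring

lemma HfExpB.tendsto {g : ℝ → ℝ} (hg : HfExpB g) (a : ℝ) :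
    Tendsto (fun x => x ^ a * g x) atTop (𝓝 0) := by
  obtain ⟨hg0, C, c, hc, hC, hb⟩ := hg
  have h := (tendsto_rpow_mul_exp_neg_mul_atTop_nhds_zero a c hc).const_mul C
  rw [mul_zero] at h
  refine squeeze_zero_norm' ?_ h
  filter_upwards [eventually_gt_atTop 0] with x hx
  rw [norm_mul, Real.norm_eq_abs, Real.norm_eq_abs, abs_of_nonneg (by positivity)]
  calc x ^ a * |g x| ≤ x ^ a * (C * Real.exp (-c * x)) := by gcongr; exact hb x hx.le
      _ = _ := by ring

/-- integrability against a function `φ` bounded by a power -/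
lemma HfExpB.integrableOn_mul {g : ℝ → ℝ} (hg : HfExpB g) {a s M : ℝ} (ha : -1 < a + s)
    {φ : ℝ → ℂ} (hφ : Continuous φ) (hM : ∀ x, 0 < x → ‖φ x‖ ≤ M * x ^ s) :
    IntegrableOn (fun x => ((x ^ a * g x : ℝ) : ℂ) * φ x) (Ioi 0) := by
  have h := ((hg.integrableOn ha).norm).const_mul M
  refine Integrable.mono' h ?_ ?_
  · apply ContinuousOn.aestronglyMeasurable _ measurableSet_Ioi
    apply ContinuousOn.mul _ hφ.continuousOn
    apply Complex.continuous_ofReal.comp_continuousOn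
    apply ContinuousOn.mul _ hg.1.continuousOn
    exact fun x hx => (Real.continuousAt_rpow_const _ _ (Or.inl hx.ne')).continuousWithinAt
  · refine (ae_restrict_iff' measurableSet_Ioi).2 (ae_of_all _ fun x (hx : 0 < x) => ?_)
    rw [norm_mul, Complex.norm_real, norm_mul, norm_mul, Real.rpow_add hx, norm_mul]
    have : ‖x ^ s‖ = x ^ s := by rw [Real.norm_eq_abs, abs_of_nonneg (by positivity)]
    rw [this]
    calc ‖x ^ a‖ * ‖g x‖ * ‖φ x‖ ≤ ‖x ^ a‖ * ‖g x‖ * (M * x ^ s) := by gcongr; exact hM x hx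
      _ = _ := by ring

lemma hf_ibp {a s M M' : ℝ} {g g' : ℝ → ℝ} {φ φ' : ℝ → ℂ} (hg : HfExpB g) (hg' : HfExpB g')
    (hd : ∀ x, HasDerivAt g (g' x) x) (hdφ : ∀ x, HasDerivAt φ (φ' x) x) (hφ' : Continuous φ')
    (ha : -1 < a) (hs : 0 < a + s) (hM : ∀ x, 0 < x → ‖φ x‖ ≤ M * x ^ s)
    (hM' : ∀ x, 0 < x → ‖φ' x‖ ≤ M') :
    (∫ x in Ioi (0:ℝ), ((x ^ (a - 1) * (a * g x + x * g' x) : ℝ) : ℂ) * φ x)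
      + ∫ x in Ioi (0:ℝ), ((x ^ a * g x : ℝ) : ℂ) * φ' x = 0 := by
  have hφ : Continuous φ := continuous_iff_continuousAt.2 fun x => (hdφ x).continuousAt
  have i1 := HfExpB.integrableOn_mul ((hg.const_mul a).add hg'.x_mul) (a := a - 1) (s := s)
    (by linarith) hφ hM
  have i2 := hg.integrableOn_mul (a := a) (s := 0) (M := M') (by linarith) hφ'
    (by simpa using hM')
  rw [← integral_add i1 i2]
  have key := integral_Ioi_deriv_mul_eq_sub (A := ℂ) (a := 0) (a' := 0) (b' := 0)
    (u := fun x => ((x ^ a * g x : ℝ) : ℂ)) (v := φ)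
    (u' := fun x => ((x ^ (a - 1) * (a * g x + x * g' x) : ℝ) : ℂ)) (v' := φ')
    ?_ (fun x _ => hdφ x) ?_ ?_ ?_
  · simpa using key
  · intro x hx
    have hx : 0 < x := hx
    have := ((Real.hasDerivAt_rpow_const (p := a) (Or.inl hx.ne')).mul (hd x)).ofReal_comp
    refine this.congr_deriv ?_
    congr 1
    rw [show x ^ a = x ^ (a - 1) * x by
      rw [Real.rpow_sub_one hx.ne', div_mul_cancel₀ _ hx.ne']]
    ring
  · exact i1.add i2
  · have hgl : Tendsto (fun x => |g x|) (𝓝[>] 0) (𝓝 |g 0|) :=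
      (hg.1.abs.tendsto 0).mono_left nhdsWithin_le_nhds
    have hp : Tendsto (fun x : ℝ => x ^ (a + s)) (𝓝[>] 0) (𝓝 0) := by
      have := (Real.continuousAt_rpow_const 0 (a + s) (Or.inr hs.le)).tendsto
      rw [Real.zero_rpow hs.ne'] at this
      exact this.mono_left nhdsWithin_le_nhds
    have h := (hp.mul hgl).const_mul M
    rw [zero_mul, mul_zero] at h
    refine squeeze_zero_norm' ?_ h
    filter_upwards [self_mem_nhdsWithin] with x hx
    have hx : 0 < x := hx
    simp only [Pi.mul_apply]
    rw [norm_mul, Complex.norm_real, norm_mul, Real.rpow_add hx, Real.norm_eq_abs,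
      Real.norm_eq_abs, abs_of_nonneg (by positivity : 0 ≤ x ^ a)]
    calc x ^ a * |g x| * ‖φ x‖ ≤ x ^ a * |g x| * (M * x ^ s) := by gcongr; exact hM x hx
      _ = _ := by ring
  · have h := ((hg.tendsto (a + s)).norm).const_mul M
    rw [norm_zero, mul_zero] at h
    refine squeeze_zero_norm' ?_ h
    filter_upwards [eventually_gt_atTop 0] with x hx
    simp only [Pi.mul_apply]
    rw [norm_mul, Complex.norm_real, norm_mul, norm_mul, Real.rpow_add hx, norm_mul]
    have : ‖x ^ s‖ = x ^ s := by rw [Real.norm_eq_abs, abs_of_nonneg (by positivity)]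
    rw [this]
    calc ‖x ^ a‖ * ‖g x‖ * ‖φ x‖ ≤ ‖x ^ a‖ * ‖g x‖ * (M * x ^ s) := by gcongr; exact hM x hx
      _ = _ := by ring

lemma hf_ibp_real {a : ℝ} {g g' : ℝ → ℝ} (hg : HfExpB g) (hg' : HfExpB g')
    (hd : ∀ x, HasDerivAt g (g' x) x) (ha : 0 < a) :
    a * (∫ x in Ioi (0:ℝ), x ^ (a - 1) * g x) = - ∫ x in Ioi (0:ℝ), x ^ a * g' x := by
  have h := hf_ibp (a := a) (s := 0) (M := 1) (M' := 0) (φ := fun _ => 1) (φ' := fun _ => 0)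
    hg hg' hd (fun x => hasDerivAt_const _ _) continuous_const (by linarith) (by linarith)
    (by simp) (by simp)
  simp only [mul_one, mul_zero, integral_zero, add_zero] at h
  rw [integral_complex_ofReal, Complex.ofReal_eq_zero] at h
  have e : ∫ x in Ioi (0:ℝ), x ^ (a - 1) * (a * g x + x * g' x) =
      ∫ x in Ioi (0:ℝ), (a * (x ^ (a - 1) * g x) + x ^ a * g' x) := by
    refine setIntegral_congr_fun measurableSet_Ioi fun x hx => ?_
    have hx : 0 < x := hx
    rw [show x ^ a = x ^ (a - 1) * x by
      rw [Real.rpow_sub_one hx.ne', div_mul_cancel₀ _ hx.ne']]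
    ring
  rw [e, integral_add ((hg.integrableOn (by linarith)).const_mul a) (hg'.integrableOn (by linarith)),
    integral_const_mul] at h
  linarith

lemma hf_exp_sub_one_le {b t : ℝ} (hb0 : 0 ≤ b) (hb1 : b ≤ 1) :
    ‖Complex.exp ((t : ℂ) * Complex.I) - 1‖ ≤ 2 * |t| ^ (1 - b) := by
  rcases eq_or_ne t 0 with rfl | ht
  · simp; positivity
  have htp : 0 < |t| := abs_pos.2 ht
  rcases le_total |t| 1 with h | h
  · have h1 := Real.norm_exp_I_mul_ofReal_sub_one_le (x := t)
    rw [mul_comm] at h1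
    have h2 : |t| ^ (1:ℝ) ≤ |t| ^ (1 - b) :=
      Real.rpow_le_rpow_of_exponent_ge htp h (by linarith)
    rw [Real.rpow_one] at h2
    rw [Real.norm_eq_abs] at h1
    linarith
  · have h2 : 1 ≤ |t| ^ (1 - b) := Real.one_le_rpow h (by linarith)
    calc _ ≤ ‖Complex.exp ((t : ℂ) * Complex.I)‖ + ‖(1:ℂ)‖ := norm_sub_le _ _
      _ = 2 := by rw [Complex.norm_exp_ofReal_mul_I]; norm_num
      _ ≤ _ := by linarith

lemma hf_hasDerivAt_e (ξ x : ℝ) :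
    HasDerivAt (fun x : ℝ => Complex.exp (((ξ * x : ℝ) : ℂ) * Complex.I))
      (ξ * Complex.I * Complex.exp (((ξ * x : ℝ) : ℂ) * Complex.I)) x := by
  have h : HasDerivAt (fun x : ℝ => (((ξ * x : ℝ) : ℂ) * Complex.I)) (ξ * Complex.I) x := by
    have := (((hasDerivAt_id x).const_mul ξ).ofReal_comp).mul_const Complex.I
    simpa using this
  have := h.cexp
  convert this using 1
  ring

lemma hf_fourier_bound (n : ℕ) : ∀ (a b : ℝ) (g : ℝ → ℝ), -1 < a → 0 ≤ b → b ≤ n + 1 → b < a + 1 →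
    HfNice (n + 1) g → ∃ C : ℝ, 0 ≤ C ∧ ∀ ξ : ℝ, ξ ≠ 0 →
      ‖∫ x in Ioi (0:ℝ), ((x ^ a * g x : ℝ) : ℂ) * Complex.exp (((ξ * x : ℝ) : ℂ) * Complex.I)‖
        ≤ C * |ξ| ^ (-b) := by
  have base : ∀ (a b : ℝ) (g : ℝ → ℝ), -1 < a → 0 ≤ b → b ≤ 1 → b < a + 1 →
    HfNice 1 g → ∃ C : ℝ, 0 ≤ C ∧ ∀ ξ : ℝ, ξ ≠ 0 →
      ‖∫ x in Ioi (0:ℝ), ((x ^ a * g x : ℝ) : ℂ) * Complex.exp (((ξ * x : ℝ) : ℂ) * Complex.I)‖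
        ≤ C * |ξ| ^ (-b) := by
    intro a b g ha hb0 hb1 hba hg
    obtain ⟨hg0, g', hd, hg'⟩ := hg
    have hg' : HfExpB g' := hg'
    have hg1 : HfExpB (fun x => a * g x + x * g' x) := (hg0.const_mul a).add hg'.x_mul
    refine ⟨2 * ∫ x in Ioi (0:ℝ), ‖x ^ (a - b) * (a * g x + x * g' x)‖,
      mul_nonneg two_pos.le (integral_nonneg fun x => norm_nonneg _), fun ξ hξ => ?_⟩
    have hξ' : 0 < |ξ| := abs_pos.2 hξ
    have hder : ∀ x : ℝ, HasDerivAt (fun x : ℝ => Complex.exp (((ξ * x : ℝ) : ℂ) * Complex.I) - 1)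
      (ξ * Complex.I * Complex.exp (((ξ * x : ℝ) : ℂ) * Complex.I)) x :=
      fun x => (hf_hasDerivAt_e ξ x).sub_const 1
    have h := hf_ibp (a := a) (s := 1) (M := |ξ|) (M' := |ξ|) hg0 hg' hd hder (by fun_prop) ha
      (by linarith) ?_ ?_
    · have h2 : ∫ x in Ioi (0:ℝ), ((x ^ a * g x : ℝ) : ℂ) *
          (ξ * Complex.I * Complex.exp (((ξ * x : ℝ) : ℂ) * Complex.I)) = (ξ * Complex.I) *
          ∫ x in Ioi (0:ℝ), ((x ^ a * g x : ℝ) : ℂ) *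
            Complex.exp (((ξ * x : ℝ) : ℂ) * Complex.I) := by
        rw [← integral_const_mul]
        congr 1; ext x; ring
      rw [h2] at h
      have h3 := congrArg norm (eq_neg_of_add_eq_zero_right h)
      rw [norm_neg, norm_mul, norm_mul, Complex.norm_real, Complex.norm_I, mul_one,
        Real.norm_eq_abs] at h3
      have h4 : ‖∫ x in Ioi (0:ℝ), ((x ^ (a - 1) * (a * g x + x * g' x) : ℝ) : ℂ) *
          (Complex.exp (((ξ * x : ℝ) : ℂ) * Complex.I) - 1)‖ ≤
          ∫ x in Ioi (0:ℝ), (2 * |ξ| ^ (1 - b)) * ‖x ^ (a - b) * (a * g x + x * g' x)‖ := by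
        refine norm_integral_le_of_norm_le
          (((hg1.integrableOn (by linarith : -1 < a - b)).norm).const_mul _) ?_
        refine (ae_restrict_iff' measurableSet_Ioi).2 (ae_of_all _ fun x (hx : 0 < x) => ?_)
        rw [norm_mul, Complex.norm_real, norm_mul, norm_mul]
        have h5 := hf_exp_sub_one_le (t := ξ * x) hb0 hb1
        rw [abs_mul, abs_of_pos hx, Real.mul_rpow (abs_nonneg _) hx.le] at h5
        have h6 : ‖x ^ (a - b)‖ = ‖x ^ (a - 1)‖ * x ^ (1 - b) := by
          rw [Real.norm_eq_abs, Real.norm_eq_abs, abs_of_nonneg (by positivity),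
            abs_of_nonneg (by positivity), ← Real.rpow_add hx]
          congr 1; ring
        rw [h6]
        calc _ ≤ ‖x ^ (a - 1)‖ * ‖a * g x + x * g' x‖ * (2 * (|ξ| ^ (1 - b) * x ^ (1 - b))) := by
              gcongr
          _ = _ := by ring
      rw [integral_const_mul, ← h3, Real.rpow_sub hξ', Real.rpow_one, div_eq_mul_inv,
        ← Real.rpow_neg hξ'.le] at h4
      refine le_of_mul_le_mul_left (h4.trans (le_of_eq ?_)) hξ'
      ring
    · intro x hx
      have := hf_exp_sub_one_le (b := 0) (t := ξ * x) le_rfl zero_le_one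
      have h1 := Real.norm_exp_I_mul_ofReal_sub_one_le (x := ξ * x)
      rw [mul_comm] at h1
      rw [Real.norm_eq_abs, abs_mul, abs_of_pos hx] at h1
      rw [Real.rpow_one]
      exact h1
    · intro x hx
      rw [norm_mul, Complex.norm_exp_ofReal_mul_I, norm_mul, Complex.norm_real, Complex.norm_I]
      simp
  induction n with
  | zero =>
    intro a b g ha hb0 hb1 hba hg
    exact base a b g ha hb0 (by simpa using hb1) hba hg
  | succ n ih =>
    intro a b g ha hb0 hb1 hba hg
    rcases le_or_gt b 1 with hb | hb
    · have hg1 : ∀ m : ℕ, ∀ f : ℝ → ℝ, HfNice (m + 1) f → HfNice 1 f := by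
        intro m
        induction m with
        | zero => exact fun f hf => hf
        | succ m ihm => exact fun f hf => ihm f hf.of_succ
      exact base a b g ha hb0 hb hba (hg1 _ g hg)
    have hgn := hg.of_succ
    obtain ⟨hg0, g', hd, hg'⟩ := hg
    obtain ⟨C, hC, hb'⟩ := ih (a - 1) (b - 1) (fun x => a * g x + x * g' x) (by linarith)
      (by linarith) (by push_cast at hb1; linarith) (by linarith) ((hgn.const_mul a).add hg'.x_mul)
    refine ⟨C, hC, fun ξ hξ => ?_⟩
    have hξ' : 0 < |ξ| := abs_pos.2 hξ
    have h := hf_ibp (a := a) (s := 0) (M := 1) (M' := |ξ|) hg0 hg'.expB hd (hf_hasDerivAt_e ξ)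
      (by fun_prop) ha (by linarith) ?_ ?_
    · have h2 : ∫ x in Ioi (0:ℝ), ((x ^ a * g x : ℝ) : ℂ) *
          (ξ * Complex.I * Complex.exp (((ξ * x : ℝ) : ℂ) * Complex.I)) = (ξ * Complex.I) *
          ∫ x in Ioi (0:ℝ), ((x ^ a * g x : ℝ) : ℂ) *
            Complex.exp (((ξ * x : ℝ) : ℂ) * Complex.I) := by
        rw [← integral_const_mul]
        congr 1; ext x; ring
      rw [h2] at h
      have h3 := congrArg norm (eq_neg_of_add_eq_zero_right h)
      rw [norm_neg, norm_mul, norm_mul, Complex.norm_real, Complex.norm_I, mul_one,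
        Real.norm_eq_abs] at h3
      have h4 := hb' ξ hξ
      rw [← h3, show -(b - 1) = 1 + -b by ring, Real.rpow_add hξ', Real.rpow_one] at h4
      refine le_of_mul_le_mul_left (h4.trans (le_of_eq ?_)) hξ'
      ring
    · intro x hx
      rw [Complex.norm_exp_ofReal_mul_I]; simp
    · intro x hx
      rw [norm_mul, Complex.norm_exp_ofReal_mul_I, norm_mul, Complex.norm_real, Complex.norm_I]
      simp

lemma HfExpB.scale {g : ℝ → ℝ} (hg : HfExpB g) {r : ℝ} (hr : 0 < r) :
    HfExpB (fun x => g (r * x)) := by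
  obtain ⟨hg0, C, c, hc, hC, hb⟩ := hg
  refine ⟨by fun_prop, C, c * r, by positivity, hC, fun x hx => ?_⟩
  have := hb (r * x) (by positivity)
  rwa [show -(c * r) * x = -c * (r * x) by ring]

/-- the oscillatory integral -/
noncomputable def hfJ (a : ℝ) (g : ℝ → ℝ) (ξ : ℝ) : ℂ :=
  ∫ x in Ioi (0:ℝ), ((x ^ a * g x : ℝ) : ℂ) * Complex.exp (((ξ * x : ℝ) : ℂ) * Complex.I)

lemma hfJ_zero (a : ℝ) (g : ℝ → ℝ) : hfJ a g 0 = ((∫ x in Ioi (0:ℝ), x ^ a * g x : ℝ) : ℂ) := by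
  rw [hfJ, ← integral_complex_ofReal]
  simp

/-- the function to be summed -/
noncomputable def hfG (a : ℝ) (g : ℝ → ℝ) (r : ℝ) (x : ℝ) : ℂ :=
  (((max x 0) ^ a * g (r * x) : ℝ) : ℂ)

lemma hfG_fourier {a : ℝ} (ha : 0 < a) (g : ℝ → ℝ) {r : ℝ} (hr : 0 < r) (w : ℝ) :
    FourierTransform.fourier (hfG a g r) w
      = ((r ^ (-(a + 1)) : ℝ) : ℂ) * hfJ a g (-2 * π * w / r) := by
  rw [Real.fourier_real_eq_integral_exp_smul,
    ← setIntegral_eq_integral_of_forall_compl_eq_zero (s := Ioi 0)]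
  · have h := integral_comp_mul_left_Ioi (fun x : ℝ => ((r ^ (-a) : ℝ) : ℂ) *
      (((x ^ a * g x : ℝ) : ℂ) *
        Complex.exp ((((-2 * π * w / r) * x : ℝ) : ℂ) * Complex.I))) 0 hr
    rw [mul_zero] at h
    rw [hfJ]
    have e : ((r ^ (-(a + 1)) : ℝ) : ℂ) = (r⁻¹ : ℝ) * ((r ^ (-a) : ℝ) : ℂ) := by
      rw [← Complex.ofReal_mul, neg_add, Real.rpow_add hr, Real.rpow_neg_one, mul_comm]
    rw [e, mul_assoc, ← Complex.real_smul, ← integral_const_mul, ← h]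
    refine setIntegral_congr_fun measurableSet_Ioi fun x hx => ?_
    have hx : 0 < x := hx
    have h1 : (-2 * π * w / r) * (r * x) = -2 * π * x * w := by field_simp
    have h2 : r ^ (-a) * ((r * x) ^ a * g (r * x)) = x ^ a * g (r * x) := by
      rw [Real.mul_rpow hr.le hx.le, Real.rpow_neg hr.le]
      have : r ^ a ≠ 0 := by positivity
      field_simp
    simp only [hfG, smul_eq_mul]
    rw [h1, max_eq_left hx.le, ← h2]
    push_cast
    ring
  · intro x hx
    have hx : x ≤ 0 := by simpa using hx
    simp [hfG, max_eq_right hx, Real.zero_rpow ha.ne']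

lemma hfG_decay {a b : ℝ} (ha : 0 < a) {g : ℝ → ℝ} (hg : HfExpB g) {r : ℝ} (hr : 0 < r) :
    hfG a g r =O[cocompact ℝ] fun x => |x| ^ (-b) := by
  rw [cocompact_eq_atBot_atTop, isBigO_sup]
  constructor
  · refine IsBigO.of_bound 1 ?_
    filter_upwards [eventually_le_atBot 0] with x hx
    simp only [hfG, max_eq_right hx, Real.zero_rpow ha.ne']
    simp
  · refine IsBigO.of_bound 1 ?_
    have h := (hg.scale hr).tendsto (a + b)
    filter_upwards [eventually_gt_atTop 0, h.norm.eventually_le_const (by simp : ‖(0:ℝ)‖ < 1)]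
      with x hx h1
    rw [hfG, max_eq_left hx.le, Complex.norm_real, abs_of_pos hx, one_mul]
    rw [Real.rpow_add hx, mul_right_comm, norm_mul, Real.norm_eq_abs (x ^ b),
      abs_of_pos (by positivity : 0 < x ^ b)] at h1
    rw [Real.norm_eq_abs (x ^ (-b)), abs_of_pos (by positivity), Real.rpow_neg hx.le]
    rw [← one_div, le_div_iff₀ (by positivity)]
    exact h1

lemma hf_poisson_bound {a b C : ℝ} (ha : 0 < a) (hb : 1 < b) (hC : 0 ≤ C) {g : ℝ → ℝ}
    (hg : HfExpB g) (hJ : ∀ ξ : ℝ, ξ ≠ 0 → ‖hfJ a g ξ‖ ≤ C * |ξ| ^ (-b)) {r : ℝ} (hr : 0 < r) :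
    |(∑' k : ℕ, (k : ℝ) ^ a * g (r * k)) - r ^ (-(a + 1)) * ∫ x in Ioi (0:ℝ), x ^ a * g x|
      ≤ (C * (2 * π) ^ (-b) * ∑' n : ℤ, |(n : ℝ)| ^ (-b)) * r ^ (b - a - 1) := by
  have hFb : ∀ w : ℝ, w ≠ 0 → ‖FourierTransform.fourier (hfG a g r) w‖
      ≤ (C * (2 * π) ^ (-b) * r ^ (b - a - 1)) * |w| ^ (-b) := by
    intro w hw
    have hw' : 0 < |w| := abs_pos.2 hw
    rw [hfG_fourier ha g hr, norm_mul, Complex.norm_real, Real.norm_eq_abs,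
      abs_of_pos (by positivity)]
    have hne : -2 * π * w / r ≠ 0 := by
      have := Real.pi_ne_zero
      simp [hw, hr.ne', this]
    have h := hJ _ hne
    have e : |-2 * π * w / r| = (2 * π) * |w| * r⁻¹ := by
      rw [abs_div, abs_mul, abs_mul, abs_of_pos hr, abs_of_pos Real.pi_pos, div_eq_mul_inv]
      norm_num
    rw [e, Real.mul_rpow (by positivity) (by positivity), Real.mul_rpow (by positivity)
      (by positivity), Real.inv_rpow hr.le, Real.rpow_neg hr.le b, inv_inv] at h
    calc _ ≤ r ^ (-(a + 1)) * (C * ((2 * π) ^ (-b) * |w| ^ (-b) * r ^ b)) := by gcongr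
      _ = _ := by
        rw [show b - a - 1 = b + (-(a + 1)) by ring, Real.rpow_add hr]; ring
  have hcont : Continuous (hfG a g r) := by
    have h1 : Continuous fun x : ℝ => (max x 0) ^ a :=
      (continuous_id.max continuous_const).rpow_const fun x => Or.inr ha.le
    exact Complex.continuous_ofReal.comp (h1.mul (hg.1.comp (continuous_const.mul continuous_id)))
  have hFdec : FourierTransform.fourier (hfG a g r) =O[cocompact ℝ] fun x => |x| ^ (-b) := by
    refine IsBigO.of_bound (C * (2 * π) ^ (-b) * r ^ (b - a - 1)) ?_
    have : {x : ℝ | x ≠ 0} ∈ cocompact ℝ := isCompact_singleton.compl_mem_cocompact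
    filter_upwards [this] with w hw
    have hw' : 0 < |w| := abs_pos.2 hw
    rw [Real.norm_eq_abs (|w| ^ (-b)), abs_of_pos (by positivity : 0 < |w| ^ (-b))]
    exact hFb w hw
  have hP := Real.tsum_eq_tsum_fourier_of_rpow_decay hcont hb (hfG_decay ha hg hr) hFdec 0
  simp only [zero_add, QuotientAddGroup.mk_zero, fourier_eval_zero, mul_one] at hP
  have hS : ∑' n : ℤ, hfG a g r n = ((∑' k : ℕ, (k : ℝ) ^ a * g (r * k) : ℝ) : ℂ) := by
    rw [← Nat.cast_injective.tsum_eq (g := fun n : ℕ => (n : ℤ)), Complex.ofReal_tsum]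
    · congr 1; ext k
      simp [hfG]
    · intro n hn
      by_contra hcon
      have : n < 0 := by
        by_contra h
        exact hcon ⟨n.toNat, by simp; omega⟩
      apply hn
      have h2 : (n : ℝ) ≤ 0 := by exact_mod_cast this.le
      simp [hfG, max_eq_right h2, Real.zero_rpow ha.ne']
  have hsum0 : Summable fun n : ℤ => (C * (2 * π) ^ (-b) * r ^ (b - a - 1)) * |(n : ℝ)| ^ (-b) :=
    (Real.summable_abs_int_rpow hb).mul_left _
  have hbd : ∀ n : ℤ, ‖if n = 0 then 0 else FourierTransform.fourier (hfG a g r) (n : ℝ)‖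
      ≤ (C * (2 * π) ^ (-b) * r ^ (b - a - 1)) * |(n : ℝ)| ^ (-b) := by
    intro n
    split_ifs with h
    · rw [norm_zero]; positivity
    · exact hFb _ (by exact_mod_cast h)
  have hsumF : Summable fun n : ℤ => FourierTransform.fourier (hfG a g r) (n : ℝ) := by
    refine Summable.of_norm_bounded_eventually hsum0 ?_
    have : {n : ℤ | n ≠ 0} ∈ cofinite := by
      have h := (Set.finite_singleton (0:ℤ)).compl_mem_cofinite
      exact h
    filter_upwards [this] with n hn
    exact hFb _ (by exact_mod_cast hn)
  rw [hsumF.tsum_eq_add_tsum_ite 0, hS] at hP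
  have h0 : FourierTransform.fourier (hfG a g r) ((0:ℤ) : ℝ)
      = ((r ^ (-(a + 1)) * ∫ x in Ioi (0:ℝ), x ^ a * g x : ℝ) : ℂ) := by
    rw [hfG_fourier ha g hr]
    simp [hfJ_zero]
  rw [h0] at hP
  have h1 := sub_eq_of_eq_add' hP
  rw [← Complex.ofReal_sub] at h1
  rw [← Real.norm_eq_abs, ← Complex.norm_real, h1]
  refine (tsum_of_norm_bounded hsum0.hasSum hbd).trans (le_of_eq ?_)
  rw [tsum_mul_left]; ring

lemma hf_sum_asymp {a : ℝ} (ha : 0 < a) {g : ℝ → ℝ} (hg : ∀ n, HfNice n g) :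
    (fun r : ℝ => (∑' k : ℕ, (k : ℝ) ^ a * g (r * k))
        - r ^ (-(a + 1)) * ∫ x in Ioi (0:ℝ), x ^ a * g x)
      =O[𝓝[>] 0] fun r : ℝ => r ^ (-(1/2 : ℝ)) := by
  have hb1 : 1 < max (a + 1 / 2) (1 + a / 2) := lt_max_of_lt_right (by linarith)
  have hb2 : max (a + 1 / 2) (1 + a / 2) < a + 1 := max_lt (by linarith) (by linarith)
  have hb3 : a + 1 / 2 ≤ max (a + 1 / 2) (1 + a / 2) := le_max_left _ _
  generalize max (a + 1 / 2) (1 + a / 2) = b at hb1 hb2 hb3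
  obtain ⟨n, hn⟩ := exists_nat_ge b
  obtain ⟨C, hC, hJ⟩ := hf_fourier_bound n a b g (by linarith) (by linarith) (by linarith) hb2
    (hg (n + 1))
  refine IsBigO.of_bound (C * (2 * π) ^ (-b) * ∑' n : ℤ, |(n : ℝ)| ^ (-b)) ?_
  filter_upwards [Ioo_mem_nhdsGT (zero_lt_one' ℝ)] with r hr
  have h := hf_poisson_bound ha hb1 hC (hg 0) hJ hr.1
  rw [Real.norm_eq_abs, Real.norm_eq_abs,
    abs_of_pos (Real.rpow_pos_of_pos hr.1 _ : 0 < r ^ (-(1/2 : ℝ)))]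
  refine h.trans ?_
  have h2 : r ^ (b - a - 1) ≤ r ^ (-(1/2 : ℝ)) :=
    Real.rpow_le_rpow_of_exponent_ge hr.1 hr.2.le (by linarith)
  have h3 : 0 ≤ ∑' n : ℤ, |(n : ℝ)| ^ (-b) := tsum_nonneg fun n => by positivity
  gcongr

/-- polynomials giving the derivatives of the sigmoid -/
noncomputable def hfP : ℕ → Polynomial ℝ
  | 0 => Polynomial.X
  | n + 1 => Polynomial.derivative (hfP n) * (Polynomial.X * (1 - Polynomial.X))

/-- iterated derivatives of `log (1 + e^u)` -/
noncomputable def hfF : ℕ → ℝ → ℝ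
  | 0 => fun u => Real.log (1 + Real.exp u)
  | n + 1 => fun u => (hfP n).eval (Real.sigmoid u)

lemma hf_sigmoid_eq (u : ℝ) : Real.sigmoid u = Real.exp u / (1 + Real.exp u) := by
  rw [Real.sigmoid, Real.exp_neg]
  have := Real.exp_pos u
  field_simp
  ring

lemma hfF_hasDerivAt (m : ℕ) (u : ℝ) : HasDerivAt (hfF m) (hfF (m + 1) u) u := by
  cases m with
  | zero =>
    have h := ((Real.hasDerivAt_exp u).const_add 1).log (by positivity)
    refine h.congr_deriv ?_
    simp [hfF, hfP, hf_sigmoid_eq]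
  | succ m =>
    have h := ((hfP m).hasDerivAt (Real.sigmoid u)).comp u (Real.hasDerivAt_sigmoid u)
    refine h.congr_deriv ?_
    simp [hfF, hfP]

lemma hfF_bound (m : ℕ) : ∃ C : ℝ, 0 ≤ C ∧ ∀ u, |hfF m u| ≤ C * Real.exp u := by
  cases m with
  | zero =>
    refine ⟨1, zero_le_one, fun u => ?_⟩
    have := Real.exp_pos u
    have h1 : 0 ≤ Real.log (1 + Real.exp u) := Real.log_nonneg (by linarith)
    have h2 := Real.log_le_sub_one_of_pos (by linarith : 0 < 1 + Real.exp u)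
    simp only [hfF]
    rw [abs_of_nonneg h1]
    linarith
  | succ m =>
    have hX : Polynomial.X ∣ hfP m := by
      cases m with
      | zero => exact dvd_rfl
      | succ m => exact Dvd.dvd.mul_left (dvd_mul_right _ _) _
    obtain ⟨Q, hQ⟩ := hX
    obtain ⟨C, hC⟩ := (isCompact_Icc (a := (0:ℝ)) (b := 1)).exists_bound_of_continuousOn
      (f := fun x => Q.eval x) Q.continuous.continuousOn
    refine ⟨C, (norm_nonneg _).trans (hC 0 (by simp)), fun u => ?_⟩
    have he := Real.exp_pos u
    have h0 : 0 ≤ Real.sigmoid u := by rw [hf_sigmoid_eq]; positivity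
    have h1 : Real.sigmoid u ≤ 1 := by
      rw [hf_sigmoid_eq, div_le_one (by positivity)]; linarith
    have h2 : Real.sigmoid u ≤ Real.exp u := by
      rw [hf_sigmoid_eq]; exact div_le_self he.le (by linarith)
    have h3 := hC _ ⟨h0, h1⟩
    simp only [hfF, hQ, Polynomial.eval_mul, Polynomial.eval_X]
    rw [abs_mul, abs_of_nonneg h0, mul_comm]
    exact mul_le_mul h3 h2 h0 ((norm_nonneg _).trans h3)

lemma hfF_nice (n : ℕ) : ∀ (m : ℕ) (c ρ : ℝ), HfNice n (fun x => c * hfF m (ρ - x)) := by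
  have base : ∀ (m : ℕ) (c ρ : ℝ), HfExpB (fun x => c * hfF m (ρ - x)) := by
    intro m c ρ
    apply HfExpB.const_mul
    obtain ⟨C, hC, h⟩ := hfF_bound m
    have hc : Continuous (hfF m) :=
      continuous_iff_continuousAt.2 fun x => (hfF_hasDerivAt m x).continuousAt
    refine ⟨by fun_prop, C * Real.exp ρ, 1, one_pos, by positivity, fun x _ => ?_⟩
    refine (h _).trans (le_of_eq ?_)
    rw [mul_assoc, ← Real.exp_add]
    congr 2; ring
  induction n with
  | zero => exact base
  | succ n ih =>
    intro m c ρ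
    refine ⟨base m c ρ, fun x => (-c) * hfF (m + 1) (ρ - x), fun x => ?_, ih _ _ _⟩
    have h := ((hfF_hasDerivAt m (ρ - x)).comp x ((hasDerivAt_id x).const_sub ρ)).const_mul c
    refine h.congr_deriv ?_
    ring

/-- termwise differentiated sum -/
noncomputable def hfS (γ : ℝ) (n m : ℕ) (τ σ : ℝ) : ℝ :=
  ∑' k : ℕ, (k : ℝ) ^ γ * ((-(k : ℝ)) ^ n * hfF m (σ - k * τ))

lemma hf_summable_aux {γ : ℝ} (hγ : 0 < γ) (n : ℕ) {τ : ℝ} (hτ : 0 < τ) (D : ℝ) :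
    Summable fun k : ℕ => (k : ℝ) ^ γ * ((k : ℝ) ^ n * (D * Real.exp (-(τ * k)))) := by
  obtain ⟨N, hN⟩ := exists_nat_ge γ
  have h := (Real.summable_pow_mul_exp_neg_nat_mul (N + n) hτ).mul_left |D|
  refine Summable.of_norm_bounded h fun k => ?_
  rw [norm_mul, norm_mul, norm_mul, Real.norm_eq_abs, Real.norm_eq_abs, Real.norm_eq_abs,
    Real.norm_eq_abs, abs_of_nonneg (by positivity), abs_of_nonneg (by positivity),
    abs_of_pos (Real.exp_pos _)]
  have h1 : (k : ℝ) ^ γ ≤ (k : ℝ) ^ N := by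
    rcases Nat.eq_zero_or_pos k with rfl | hk
    · rw [Nat.cast_zero, Real.zero_rpow hγ.ne']; positivity
    · rw [← Real.rpow_natCast]
      exact Real.rpow_le_rpow_of_exponent_le (by exact_mod_cast hk) hN
  calc _ ≤ (k : ℝ) ^ N * ((k : ℝ) ^ n * (|D| * Real.exp (-(τ * k)))) := by gcongr
    _ = _ := by rw [pow_add, neg_mul]; ring

lemma hf_term_bound (γ : ℝ) (n : ℕ) {m : ℕ} {C : ℝ} (hC : 0 ≤ C)
    (h : ∀ u, |hfF m u| ≤ C * Real.exp u) (k : ℕ) {τ τ₀ σ B : ℝ} (hσ : σ ≤ B) (hτ : τ₀ ≤ τ) :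
    ‖(k : ℝ) ^ γ * ((-(k : ℝ)) ^ n * hfF m (σ - k * τ))‖
      ≤ (k : ℝ) ^ γ * ((k : ℝ) ^ n * (C * Real.exp B * Real.exp (-(τ₀ * k)))) := by
  rw [norm_mul, norm_mul, norm_pow, norm_neg, Real.norm_eq_abs, Real.norm_eq_abs, Real.norm_eq_abs,
    abs_of_nonneg (by positivity), abs_of_nonneg (by positivity : (0:ℝ) ≤ k)]
  gcongr
  refine (h _).trans ?_
  rw [mul_assoc, ← Real.exp_add]
  gcongr
  have : (k : ℝ) * τ₀ ≤ k * τ := by gcongr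
  linarith

lemma hf_summable {γ : ℝ} (hγ : 0 < γ) (n m : ℕ) {τ : ℝ} (hτ : 0 < τ) (σ : ℝ) :
    Summable fun k : ℕ => (k : ℝ) ^ γ * ((-(k : ℝ)) ^ n * hfF m (σ - k * τ)) := by
  obtain ⟨C, hC, h⟩ := hfF_bound m
  exact Summable.of_norm_bounded (hf_summable_aux hγ n hτ _)
    fun k => hf_term_bound γ n hC h k le_rfl le_rfl

lemma hfS_hasDerivAt_σ {γ : ℝ} (hγ : 0 < γ) (n m : ℕ) {τ : ℝ} (hτ : 0 < τ) (σ : ℝ) :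
    HasDerivAt (fun s => hfS γ n m τ s) (hfS γ n (m + 1) τ σ) σ := by
  obtain ⟨C, hC, h⟩ := hfF_bound (m + 1)
  refine hasDerivAt_tsum_of_isPreconnected (t := Iio (σ + 1))
    (g := fun (k : ℕ) s => (k : ℝ) ^ γ * ((-(k : ℝ)) ^ n * hfF m (s - k * τ)))
    (g' := fun (k : ℕ) s => (k : ℝ) ^ γ * ((-(k : ℝ)) ^ n * hfF (m + 1) (s - k * τ)))
    (hf_summable_aux hγ n hτ (C * Real.exp (σ + 1))) isOpen_Iio isPreconnected_Iio ?_
    (fun k s hs => hf_term_bound γ n hC h k (le_of_lt hs) le_rfl) (y₀ := σ) (by simp)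
    (hf_summable hγ n m hτ σ) (by simp)
  intro k s _
  have h := ((hfF_hasDerivAt m (s - k * τ)).comp s ((hasDerivAt_id s).sub_const (k * τ)))
  have h2 := (h.const_mul ((-(k : ℝ)) ^ n)).const_mul ((k : ℝ) ^ γ)
  refine h2.congr_deriv ?_
  ring

lemma hfS_hasDerivAt_τ {γ : ℝ} (hγ : 0 < γ) (n m : ℕ) {τ : ℝ} (hτ : 0 < τ) (σ : ℝ) :
    HasDerivAt (fun t => hfS γ n m t σ) (hfS γ (n + 1) (m + 1) τ σ) τ := by
  obtain ⟨C, hC, h⟩ := hfF_bound (m + 1)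
  refine hasDerivAt_tsum_of_isPreconnected (t := Ioi (τ / 2))
    (g := fun (k : ℕ) t => (k : ℝ) ^ γ * ((-(k : ℝ)) ^ n * hfF m (σ - k * t)))
    (g' := fun (k : ℕ) t => (k : ℝ) ^ γ * ((-(k : ℝ)) ^ (n + 1) * hfF (m + 1) (σ - k * t)))
    (hf_summable_aux hγ (n + 1) (half_pos hτ) (C * Real.exp σ)) isOpen_Ioi isPreconnected_Ioi ?_
    (fun k s hs => hf_term_bound γ (n + 1) hC h k le_rfl (le_of_lt hs)) (y₀ := τ)
    (by simpa using hτ) (hf_summable hγ n m hτ σ) (by simpa using hτ)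
  intro k t _
  have h := ((hfF_hasDerivAt m (σ - k * t)).comp t
    (((hasDerivAt_id t).const_mul (k : ℝ)).const_sub σ))
  have h2 := (h.const_mul ((-(k : ℝ)) ^ n)).const_mul ((k : ℝ) ^ γ)
  refine h2.congr_deriv ?_
  ring

lemma hfun_eq_hfS {γ : ℝ} (hγ : 0 < γ) (p q : ℕ) {τ : ℝ} (hτ : 0 < τ) (σ : ℝ) :
    hfun γ p q τ σ = hfS γ p (p + q) τ σ := by
  have hin : ∀ q : ℕ, ∀ t : ℝ, 0 < t → iteratedDeriv q
      (fun σ' : ℝ => ∑' k : ℕ, (k : ℝ) ^ γ * Real.log (1 + Real.exp (σ' - k * t)))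
      = fun s => hfS γ 0 q t s := by
    intro q t ht
    induction q with
    | zero =>
      ext s
      simp [hfS, hfF]
    | succ q ih =>
      rw [iteratedDeriv_succ, ih]
      ext s
      exact (hfS_hasDerivAt_σ hγ 0 q ht s).deriv
  have hout : ∀ p : ℕ, ∀ t : ℝ, 0 < t → hfun γ p q t σ = hfS γ p (p + q) t σ := by
    intro p
    induction p with
    | zero =>
      intro t ht
      simp only [hfun, iteratedDeriv_zero]
      rw [hin q t ht, zero_add]
    | succ p ih =>
      intro t ht
      have e : hfun γ (p + 1) q t σ = deriv (fun t' => hfun γ p q t' σ) t := by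
        simp only [hfun]
        rw [iteratedDeriv_succ]
      rw [e]
      have he : (fun t' => hfun γ p q t' σ) =ᶠ[𝓝 t] fun t' => hfS γ p (p + q) t' σ := by
        filter_upwards [Ioi_mem_nhds ht] with t' ht'
        exact ih t' ht'
      rw [he.deriv_eq, (hfS_hasDerivAt_τ hγ p (p + q) ht σ).deriv]
      congr 1
      ring
  exact hout p τ hτ

/-- the Mellin type integral -/
noncomputable def hfM (ρ a : ℝ) (m : ℕ) : ℝ := ∫ x in Ioi (0:ℝ), x ^ a * hfF m (ρ - x)

lemma hfM_succ (ρ : ℝ) {a : ℝ} (ha : 0 < a) (m : ℕ) : hfM ρ a (m + 1) = a * hfM ρ (a - 1) m := by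
  have h := hf_ibp_real (hfF_nice 0 m 1 ρ).expB (hfF_nice 0 (m + 1) (-1) ρ).expB (a := a) ?_ ha
  · simp only [one_mul, neg_mul, mul_neg, integral_neg, neg_neg] at h
    exact h.symm
  · intro x
    have h := ((hfF_hasDerivAt m (ρ - x)).comp x ((hasDerivAt_id x).const_sub ρ)).const_mul 1
    refine h.congr_deriv ?_
    ring

lemma hfM_one (ρ : ℝ) (ν : ℝ) (hν : 0 < ν) :
    hfM ρ (ν - 1) 1 = -(Real.Gamma ν * negLi ν (Real.exp ρ)) := by
  have := (Real.Gamma_pos_of_pos hν).ne'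
  rw [negLi, hfM]
  have e : ∀ x : ℝ, hfF 1 (ρ - x) = 1 / (Real.exp x / Real.exp ρ + 1) := by
    intro x
    simp only [hfF, hfP, Polynomial.eval_X, Real.sigmoid]
    rw [← Real.exp_sub, neg_sub, one_div, add_comm]
  simp only [e, mul_one_div]
  generalize (∫ x in Ioi (0:ℝ), x ^ (ν - 1) / (Real.exp x / Real.exp ρ + 1)) = K
  field_simp

lemma hfM_main (ρ : ℝ) {γ : ℝ} (hγ : 0 < γ) (p q : ℕ) (hq : 0 < γ + 2 - q) :
    hfM ρ (γ + p) (p + q) = -(negLi (γ + 2 - q) (Real.exp ρ) * Real.Gamma (γ + p + 1)) := by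
  have hν := (Real.Gamma_pos_of_pos hq).ne'
  have hgen : ∀ m : ℕ, ∀ a : ℝ, -1 < a → γ + 2 - q = a + 1 - m →
      hfM ρ a (m + 1) * Real.Gamma (γ + 2 - q)
        = Real.Gamma (a + 1) * hfM ρ (γ + 2 - q - 1) 1 := by
    intro m
    induction m with
    | zero =>
      intro a _ h
      rw [h]
      simp [mul_comm]
    | succ m ih =>
      intro a h1 h2
      push_cast at h2
      have ha : 0 < a := by
        have : (0:ℝ) ≤ m := by positivity
        linarith
      rw [hfM_succ ρ ha, Real.Gamma_add_one ha.ne', mul_assoc, ih (a - 1) (by linarith)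
        (by linarith), sub_add_cancel, mul_assoc]
  have hp : (0:ℝ) ≤ p := by positivity
  have key : hfM ρ (γ + p) (p + q) * Real.Gamma (γ + 2 - q)
      = Real.Gamma (γ + p + 1) * hfM ρ (γ + 2 - q - 1) 1 := by
    rcases Nat.eq_zero_or_pos (p + q) with h | h
    · obtain ⟨rfl, rfl⟩ : p = 0 ∧ q = 0 := by omega
      have h1 := hfM_succ ρ (a := γ + 1) (by linarith) 0
      simp only [Nat.cast_zero, sub_zero, add_zero, zero_add] at *
      rw [show γ + 2 - 1 = γ + 1 by ring, h1, show γ + 2 = γ + 1 + 1 by ring,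
        Real.Gamma_add_one (by linarith), add_sub_cancel_right]
      ring
    · obtain ⟨m, hm⟩ := Nat.exists_eq_add_of_le' h
      rw [hm]
      have hm' : (p : ℝ) + q = m + 1 := by exact_mod_cast hm
      exact hgen m _ (by linarith) (by linarith)
  rw [hfM_one ρ _ hq] at key
  apply mul_right_cancel₀ hν
  rw [key]
  ring

end Aux

/-- Lemma 6: for fixed `ρ`, as `r → 0⁺`,
`h_{γ,p,q}(r,ρ) = (−1)^{p+1} Li_{γ+2−q}(−e^ρ) Γ(γ+p+1) r^{−(γ+p+1)} + O(r^{−1/2})`. -/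
theorem hfun_asymptotic (γ : ℝ) (hγ : 0 < γ) (p q : ℕ) (hq : 0 < γ + 2 - q) (ρ : ℝ) :
    (fun r : ℝ => hfun γ p q r ρ
        - (-1 : ℝ) ^ (p + 1) * negLi (γ + 2 - q) (Real.exp ρ) * Real.Gamma (γ + p + 1)
          * r ^ (-(γ + p + 1)))
      =O[nhdsWithin 0 (Set.Ioi 0)] fun r : ℝ => r ^ (-(1/2 : ℝ)) := by
  have ha : 0 < γ + p := by positivity
  have h := (hf_sum_asymp ha (fun n => hfF_nice n (p + q) ((-1) ^ p) ρ))
  refine h.congr' ?_ EventuallyEq.rfl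
  filter_upwards [self_mem_nhdsWithin] with r hr
  have hr : 0 < r := hr
  rw [hfun_eq_hfS hγ p q hr, hfS]
  have e1 : ∫ x in Set.Ioi (0:ℝ), x ^ (γ + p) * ((-1) ^ p * hfF (p + q) (ρ - x))
      = (-1) ^ p * hfM ρ (γ + p) (p + q) := by
    rw [hfM, ← MeasureTheory.integral_const_mul]
    congr 1; ext x; ring
  rw [e1, hfM_main ρ hγ p q hq]
  congr 1
  · congr 1; ext k
    rcases Nat.eq_zero_or_pos k with rfl | hk
    · rw [Nat.cast_zero, Real.zero_rpow ha.ne', Real.zero_rpow hγ.ne']; ring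
    · have hk' : (0:ℝ) < k := by exact_mod_cast hk
      rw [Real.rpow_add hk', Real.rpow_natCast, neg_pow, mul_comm r]
      ring
  · rw [pow_succ]; ring
end

section
/- Let 0<α<1, β:=1/α, and let n≥1 be an integer. For every fixed ρ∈ℝ there exists a unique r=r(ρ)>0 such that n = ∑_{k≥1} k·g(k)/(e^{kr−ρ}+1). Moreover there are constants γ₁,γ₂>0 depending only on β such that γ₁·(−Li_{β+1}(−e^ρ))·r^{−(β+1)} ≤ n ≤ γ₂·(−Li_{β+1}(−e^ρ))·r^{−(β+1)}. -/
open Real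

/-- `g α k` is the number of positive integers `n` with `⌊n^α⌋ = k`. -/
noncomputable def g (α : ℝ) (k : ℕ) : ℕ :=
  Set.ncard {n : ℕ | 1 ≤ n ∧ ⌊(n : ℝ) ^ α⌋ = (k : ℤ)}

lemma g_eq (α β : ℝ) (hα : 0 < α ∧ α < 1) (hβ : β = 1 / α) (k : ℕ) (hk : 1 ≤ k) :
    g α k = ⌈((k : ℝ) + 1) ^ β⌉₊ - ⌈(k : ℝ) ^ β⌉₊ := by
  have hk0 : (0:ℝ) < k := by exact_mod_cast hk
  have hβ' : β = α⁻¹ := by rw [hβ, one_div]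
  have : {n : ℕ | 1 ≤ n ∧ ⌊(n : ℝ) ^ α⌋ = (k : ℤ)} =
      ((Finset.Ico ⌈(k : ℝ) ^ β⌉₊ ⌈((k : ℝ) + 1) ^ β⌉₊ : Finset ℕ) : Set ℕ) := by
    ext n
    simp only [Set.mem_ofPred_eq, Finset.coe_Ico, Set.mem_Ico, Nat.ceil_le, Nat.lt_ceil]
    have h1 : (k : ℝ) ^ β ≤ n ↔ (k : ℝ) ≤ (n : ℝ) ^ α := by
      rw [hβ']; exact Real.rpow_inv_le_iff_of_pos hk0.le (by positivity) hα.1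
    have h2 : (n : ℝ) < ((k : ℝ) + 1) ^ β ↔ (n : ℝ) ^ α < (k : ℝ) + 1 := by
      rw [hβ']; exact Real.lt_rpow_inv_iff_of_pos (by positivity) (by positivity) hα.1
    rw [h1, h2, Int.floor_eq_iff]
    push_cast
    constructor
    · rintro ⟨_, h⟩; exact h
    · intro h
      refine ⟨?_, h⟩
      rcases Nat.eq_zero_or_pos n with h0 | h0
      · subst h0
        have := h.1
        rw [Nat.cast_zero, Real.zero_rpow hα.1.ne'] at this
        linarith
      · exact h0
  rw [g, this, Set.ncard_coe_finset, Nat.card_Ico]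

lemma g_bounds (α β : ℝ) (hα : 0 < α ∧ α < 1) (hβ : β = 1 / α) (k : ℕ) (hk : 1 ≤ k) :
    (1/2) * (k : ℝ) ^ β ≤ k * g α k ∧ (k : ℝ) * g α k ≤ (2 * β * 2 ^ β) * (k : ℝ) ^ β := by
  have hk0 : (0:ℝ) < k := by exact_mod_cast hk
  have hk1 : (1:ℝ) ≤ k := by exact_mod_cast hk
  have hβ1 : 1 ≤ β := by rw [hβ, le_div_iff₀ hα.1]; linarith [hα.2]
  set A := (k : ℝ) ^ β with hA
  set B := ((k : ℝ) + 1) ^ β with hB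
  have hA0 : 0 < A := by positivity
  have hB0 : 0 < B := by positivity
  have e1 : A * (1 + β * (1 / k)) ≤ B := by
    have h := one_add_mul_self_le_rpow_one_add (s := 1 / (k:ℝ)) (by
      have : 0 < 1 / (k:ℝ) := by positivity
      linarith) hβ1
    have : B = A * (1 + 1 / (k:ℝ)) ^ β := by
      rw [hA, hB, ← Real.mul_rpow (by positivity) (by positivity)]
      congr 1; field_simp
    rw [this]; gcongr
  have e2 : B * (1 + β * (-1 / ((k:ℝ) + 1))) ≤ A := by
    have hs : -1 ≤ -1 / ((k:ℝ) + 1) := by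
      rw [le_div_iff₀ (by positivity)]; linarith
    have h := one_add_mul_self_le_rpow_one_add hs hβ1
    have : A = B * (1 + -1 / ((k:ℝ) + 1)) ^ β := by
      rw [hA, hB, ← Real.mul_rpow (by positivity) (by linarith)]
      congr 1; field_simp; ring
    rw [this]; gcongr
  have e1' : β * A ≤ k * (B - A) := by
    have : k * (A * (1 + β * (1 / k))) ≤ k * B := by gcongr
    have h2 : k * (A * (1 + β * (1 / k))) = k * A + β * A := by field_simp
    linarith
  have e2' : (k + 1) * (B - A) ≤ β * B := by
    have : (k + 1) * (B * (1 + β * (-1 / ((k:ℝ) + 1)))) ≤ (k+1) * A := by gcongr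
    have h2 : (k + 1) * (B * (1 + β * (-1 / ((k:ℝ) + 1)))) = (k+1) * B - β * B := by field_simp; ring
    linarith
  have hB2 : B ≤ 2 ^ β * A := by
    rw [hA, hB, ← Real.mul_rpow (by positivity) (by positivity)]
    gcongr; linarith
  have hA1 : (k:ℝ) ≤ A := by
    rw [hA]; exact Real.self_le_rpow_of_one_le hk1 hβ1
  have hd : 1 ≤ B - A := by
    have : (k:ℝ) * 1 ≤ k * (B - A) := by nlinarith
    exact le_of_mul_le_mul_left this hk0
  have hc : ⌈A⌉₊ + 1 ≤ ⌈B⌉₊ := by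
    rw [← Nat.ceil_add_one hA0.le]; exact Nat.ceil_mono (by linarith)
  have hg : (g α k : ℝ) = (⌈B⌉₊ : ℝ) - ⌈A⌉₊ := by
    rw [g_eq α β hα hβ k hk, Nat.cast_sub ((Nat.le_succ _).trans hc)]
  have hc' : (⌈A⌉₊ : ℝ) + 1 ≤ ⌈B⌉₊ := by exact_mod_cast hc
  have a1 := Nat.le_ceil A
  have a2 := Nat.ceil_lt_add_one hA0.le
  have b1 := Nat.le_ceil B
  have b2 := Nat.ceil_lt_add_one hB0.le
  have gl : (B - A) / 2 ≤ g α k := by rw [hg]; linarith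
  have gu : (g α k : ℝ) ≤ 2 * (B - A) := by rw [hg]; linarith
  constructor
  · have : k * ((B - A) / 2) ≤ k * g α k := by gcongr
    nlinarith
  · have h1 : k * (g α k : ℝ) ≤ k * (2 * (B - A)) := by gcongr
    have h2 : β * B ≤ β * (2 ^ β * A) := by gcongr
    nlinarith

/-- The continuous summand. -/
noncomputable def ff (β ρ r x : ℝ) : ℝ := x ^ β / (Real.exp (x * r - ρ) + 1)

lemma ff_nonneg (β ρ r x : ℝ) (hx : 0 ≤ x) : 0 ≤ ff β ρ r x := by
  unfold ff; positivity

lemma ff_cont (β ρ r : ℝ) (hβ : 0 ≤ β) : Continuous (ff β ρ r) := by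
  unfold ff
  refine Continuous.div (Real.continuous_rpow_const hβ) (by fun_prop) ?_
  intro x; positivity

lemma ff_int (β ρ r : ℝ) (hβ : 0 ≤ β) (hr : 0 < r) :
    MeasureTheory.IntegrableOn (ff β ρ r) (Set.Ioi 0) := by
  have h := integrableOn_rpow_mul_exp_neg_mul_rpow (p := 1) (s := β) (b := r)
    (by linarith) one_pos hr
  have h2 := h.const_mul (Real.exp ρ)
  refine MeasureTheory.Integrable.mono' h2 (ff_cont β ρ r hβ).aestronglyMeasurable ?_
  refine (MeasureTheory.ae_restrict_iff' measurableSet_Ioi).2 (Filter.Eventually.of_forall ?_)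
  intro x hx
  have hx : 0 < x := hx
  rw [Real.norm_of_nonneg (ff_nonneg _ _ _ _ hx.le), Real.rpow_one, ff,
    div_le_iff₀ (by positivity)]
  have e : Real.exp ρ * (x ^ β * Real.exp (-r * x)) * (Real.exp (x * r - ρ) + 1)
     = x ^ β * (Real.exp ρ * Real.exp (-r * x) * Real.exp (x * r - ρ)) + 
      Real.exp ρ * (x ^ β * Real.exp (-r * x)) := by ring
  have e2 : Real.exp ρ * Real.exp (-r * x) * Real.exp (x * r - ρ) = 1 := by
    rw [← Real.exp_add, ← Real.exp_add, Real.exp_eq_one_iff]; ring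
  rw [e, e2, mul_one]
  have : 0 ≤ Real.exp ρ * (x ^ β * Real.exp (-r * x)) := by positivity
  linarith

noncomputable def aa (β ρ r : ℝ) (k : ℕ) : ℝ := ∫ x in (k:ℝ)..((k+1 : ℕ):ℝ), ff β ρ r x

lemma aa_nonneg (β ρ r : ℝ) (k : ℕ) : 0 ≤ aa β ρ r k := by
  apply intervalIntegral.integral_nonneg
  · push_cast; linarith
  · intro u hu; exact ff_nonneg _ _ _ _ (le_trans (by positivity) hu.1)

lemma aa_hasSum (β ρ r : ℝ) (hβ : 0 ≤ β) (hr : 0 < r) :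
    HasSum (aa β ρ r) (∫ x in Set.Ioi (0:ℝ), ff β ρ r x) := by
  rw [hasSum_iff_tendsto_nat_of_nonneg (aa_nonneg β ρ r)]
  have h := MeasureTheory.intervalIntegral_tendsto_integral_Ioi (0:ℝ) (ff_int β ρ r hβ hr)
    (tendsto_natCast_atTop_atTop (R := ℝ))
  refine h.congr ?_
  intro N
  have := intervalIntegral.sum_integral_adjacent_intervals (f := ff β ρ r)
    (μ := MeasureTheory.volume) (a := fun k : ℕ => (k:ℝ)) (n := N)
    (fun k _ => (ff_cont β ρ r hβ).intervalIntegrable _ _)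
  simp only [aa]
  rw [this]; simp

/-- the summand -/
noncomputable def TT (α ρ r : ℝ) (k : ℕ) : ℝ :=
  (k : ℝ) * g α k / (Real.exp (k * r - ρ) + 1)

lemma TT_nonneg (α ρ r : ℝ) (k : ℕ) : 0 ≤ TT α ρ r k := by unfold TT; positivity

lemma TT_zero (α ρ r : ℝ) : TT α ρ r 0 = 0 := by simp [TT]

lemma aa_lower (β ρ r : ℝ) (hβ : 0 ≤ β) (hr : 0 < r) (k : ℕ) :
    ff β ρ r (k+1 : ℕ) ≤ 2 ^ (β + 1) * aa β ρ r k := by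
  have hk0 : (0:ℝ) ≤ k := by positivity
  have hint : ∀ a b : ℝ, IntervalIntegrable (ff β ρ r) MeasureTheory.volume a b :=
    fun a b => (ff_cont β ρ r hβ).intervalIntegrable _ _
  have h1 : aa β ρ r k = (∫ x in (k:ℝ)..(k + 1/2), ff β ρ r x)
      + ∫ x in (k + 1/2 : ℝ)..((k+1 : ℕ):ℝ), ff β ρ r x :=
    (intervalIntegral.integral_add_adjacent_intervals (hint _ _) (hint _ _)).symm
  have h2 : 0 ≤ ∫ x in (k:ℝ)..(k + 1/2), ff β ρ r x := by
    apply intervalIntegral.integral_nonneg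
    · linarith
    · intro u hu; exact ff_nonneg _ _ _ _ (le_trans (by positivity) hu.1)
  have h3 : (∫ x in (k + 1/2 : ℝ)..((k+1 : ℕ):ℝ), ff β ρ r (k+1:ℕ) / 2 ^ β) ≤
      ∫ x in (k + 1/2 : ℝ)..((k+1 : ℕ):ℝ), ff β ρ r x := by
    apply intervalIntegral.integral_mono_on
    · push_cast; linarith
    · simp
    · exact hint _ _
    · intro x hx
      push_cast at hx
      have hx0 : 0 < x := by linarith [hx.1]
      have : ((k+1:ℕ):ℝ) ^ β / 2 ^ β ≤ x ^ β := by
        rw [← Real.div_rpow (by positivity) (by positivity)]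
        apply Real.rpow_le_rpow (by positivity) _ hβ
        push_cast; linarith [hx.1]
      unfold ff
      rw [div_right_comm]
      apply div_le_div₀ (by positivity) this (by positivity)
      gcongr; push_cast; linarith [hx.2]
  rw [intervalIntegral.integral_const, smul_eq_mul] at h3
  push_cast at h3 h1 ⊢
  have h4 : (k + 1 - (k + 1 / 2 : ℝ)) * (ff β ρ r (k+1) / 2 ^ β) = ff β ρ r (k+1) / 2 ^ (β+1) := by
    rw [Real.rpow_add_one (by norm_num)]; field_simp; ring
  rw [h4] at h3
  have : ff β ρ r (k+1) / 2 ^ (β+1) ≤ aa β ρ r k := by linarith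
  rwa [div_le_iff₀' (by positivity)] at this

lemma aa_zero_le (β ρ r : ℝ) (hβ : 0 ≤ β) (hr : 0 < r) : aa β ρ r 0 ≤ 1 := by
  have h3 : (∫ x in (0 : ℝ)..1, ff β ρ r x) ≤ ∫ x in (0 : ℝ)..1, (1:ℝ) := by
    apply intervalIntegral.integral_mono_on zero_le_one
    · exact (ff_cont β ρ r hβ).intervalIntegrable _ _
    · simp
    · intro x hx
      unfold ff
      rw [div_le_one (by positivity)]
      have := Real.rpow_le_one hx.1 hx.2 hβ
      linarith [Real.exp_pos (x * r - ρ)]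
  simpa [aa] using h3

lemma aa_upper (β ρ r : ℝ) (hβ : 0 ≤ β) (hr : 0 < r) (k : ℕ) :
    aa β ρ r (k+1) ≤ 2 ^ β * ff β ρ r (k+1 : ℕ) := by
  have h3 : (∫ x in ((k+1:ℕ) : ℝ)..((k+1+1 : ℕ):ℝ), ff β ρ r x) ≤ 
      ∫ x in ((k+1:ℕ) : ℝ)..((k+1+1 : ℕ):ℝ), 2 ^ β * ff β ρ r (k+1 : ℕ) := by
    apply intervalIntegral.integral_mono_on
    · push_cast; linarith
    · exact (ff_cont β ρ r hβ).intervalIntegrable _ _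
    · simp
    · intro x hx
      push_cast at hx
      have hk0 : (0:ℝ) ≤ k := by positivity
      have hx0 : 0 < x := by linarith [hx.1]
      unfold ff
      rw [← mul_div_assoc, ← Real.mul_rpow (by positivity) (by positivity)]
      have : x ≤ 2 * ((k+1:ℕ):ℝ) := by push_cast; linarith [hx.2]
      apply div_le_div₀ (by positivity) (Real.rpow_le_rpow hx0.le this hβ) (by positivity)
      gcongr; push_cast; linarith [hx.1]
  rw [intervalIntegral.integral_const, smul_eq_mul] at h3
  unfold aa
  push_cast at h3 ⊢
  linarith

lemma TT_bounds (α β : ℝ) (hα : 0 < α ∧ α < 1) (hβ : β = 1 / α) (ρ r : ℝ) (k : ℕ) :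
    (1/2) * ff β ρ r (k+1 : ℕ) ≤ TT α ρ r (k+1) ∧
      TT α ρ r (k+1) ≤ (2 * β * 2 ^ β) * ff β ρ r (k+1 : ℕ) := by
  obtain ⟨h1, h2⟩ := g_bounds α β hα hβ (k+1) (by omega)
  unfold ff TT
  rw [← mul_div_assoc, ← mul_div_assoc]
  constructor
  · gcongr
  · gcongr

lemma TT_le (α β : ℝ) (hα : 0 < α ∧ α < 1) (hβ : β = 1 / α) (ρ r : ℝ) (hr : 0 < r) (k : ℕ) :
    TT α ρ r (k+1) ≤ (2 * β * 2 ^ β * 2 ^ (β + 1)) * aa β ρ r k := by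
  have hβ0 : 0 < β := by rw [hβ]; exact one_div_pos.2 hα.1
  refine (TT_bounds α β hα hβ ρ r k).2.trans ?_
  rw [mul_assoc _ _ (aa β ρ r k)]
  gcongr
  exact aa_lower β ρ r hβ0.le hr k

lemma TT_summable (α β : ℝ) (hα : 0 < α ∧ α < 1) (hβ : β = 1 / α) (ρ r : ℝ) (hr : 0 < r) :
    Summable (TT α ρ r) := by
  have hβ0 : 0 < β := by rw [hβ]; exact one_div_pos.2 hα.1
  rw [← summable_nat_add_iff 1]
  exact Summable.of_nonneg_of_le (fun k => TT_nonneg _ _ _ _) (TT_le α β hα hβ ρ r hr)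
    ((aa_hasSum β ρ r hβ0.le hr).summable.mul_left _)

/-- The Fermi-Dirac integral. -/
noncomputable def II (β ρ : ℝ) : ℝ := ∫ x in Set.Ioi (0:ℝ), ff β ρ 1 x

lemma int_scale (β ρ r : ℝ) (hr : 0 < r) :
    ∫ x in Set.Ioi (0:ℝ), ff β ρ r x = II β ρ * r ^ (-(β + 1)) := by
  have h := MeasureTheory.integral_comp_mul_right_Ioi (ff β ρ 1) 0 hr
  have h2 : ∫ x in Set.Ioi (0:ℝ), ff β ρ 1 (x * r) = r ^ β * ∫ x in Set.Ioi (0:ℝ), ff β ρ r x := by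
    rw [← MeasureTheory.integral_const_mul]
    apply MeasureTheory.setIntegral_congr_fun measurableSet_Ioi
    intro x hx
    have hx : 0 < x := hx
    simp only [ff, mul_one]
    rw [Real.mul_rpow hx.le hr.le]; ring
  rw [h2, zero_mul, smul_eq_mul] at h
  have h3 : r ^ (-(β+1)) = (r ^ β)⁻¹ * r⁻¹ := by
    rw [Real.rpow_neg hr.le, Real.rpow_add_one hr.ne', mul_inv]
  have h4 : 0 < r ^ β := by positivity
  rw [h3, II]
  field_simp
  field_simp at h
  linarith

lemma II_pos (β ρ : ℝ) (hβ : 0 ≤ β) : 0 < II β ρ := by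
  have h1 := aa_hasSum β ρ 1 hβ one_pos
  have h2 := aa_lower β ρ 1 hβ one_pos 0
  have h3 : 0 < ff β ρ 1 (0 + 1 : ℕ) := by unfold ff; positivity
  have h4 : 0 < aa β ρ 1 0 := by
    by_contra hh
    have : (2:ℝ) ^ (β+1) * aa β ρ 1 0 ≤ 0 := mul_nonpos_of_nonneg_of_nonpos (by positivity) (not_lt.1 hh)
    linarith
  exact h4.trans_le (le_hasSum h1 0 (fun k _ => aa_nonneg β ρ 1 k))

lemma negLi_eq (β ρ : ℝ) (hβ : 0 < β) :
    -negLi (β + 1) (Real.exp ρ) = II β ρ / Real.Gamma (β + 1) := by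
  unfold negLi II
  have : ∫ t in Set.Ioi (0:ℝ), t ^ (β + 1 - 1) / (Real.exp t / Real.exp ρ + 1) =
      ∫ x in Set.Ioi (0:ℝ), ff β ρ 1 x := by
    apply MeasureTheory.setIntegral_congr_fun measurableSet_Ioi
    intro x hx
    simp only [ff, mul_one, Real.exp_sub, add_sub_cancel_right]
  rw [this]; ring

lemma sum_upper (α β : ℝ) (hα : 0 < α ∧ α < 1) (hβ : β = 1 / α) (ρ r : ℝ) (hr : 0 < r) :
    ∑' k, TT α ρ r k ≤ (2 * β * 2 ^ β * 2 ^ (β + 1)) * (II β ρ * r ^ (-(β + 1))) := by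
  have hβ0 : 0 < β := by rw [hβ]; exact one_div_pos.2 hα.1
  have hs := TT_summable α β hα hβ ρ r hr
  have ha := aa_hasSum β ρ r hβ0.le hr
  rw [hs.tsum_eq_zero_add, TT_zero, zero_add, ← int_scale β ρ r hr, ← ha.tsum_eq,
    ← tsum_mul_left]
  exact Summable.tsum_le_tsum (TT_le α β hα hβ ρ r hr) ((summable_nat_add_iff 1).2 hs)
    (ha.summable.mul_left _)

lemma sum_lower (α β : ℝ) (hα : 0 < α ∧ α < 1) (hβ : β = 1 / α) (ρ r : ℝ) (hr : 0 < r) :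
    II β ρ * r ^ (-(β + 1)) ≤ 1 + 2 ^ β * 2 * ∑' k, TT α ρ r k := by
  have hβ0 : 0 < β := by rw [hβ]; exact one_div_pos.2 hα.1
  have hs := TT_summable α β hα hβ ρ r hr
  have ha := aa_hasSum β ρ r hβ0.le hr
  rw [hs.tsum_eq_zero_add, TT_zero, zero_add, ← int_scale β ρ r hr, ← ha.tsum_eq,
    ← tsum_mul_left, ha.summable.tsum_eq_zero_add]
  refine add_le_add (aa_zero_le β ρ r hβ0.le hr) ?_
  refine Summable.tsum_le_tsum (fun k => ?_) ((summable_nat_add_iff 1).2 ha.summable)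
    (((summable_nat_add_iff 1).2 hs).mul_left _)
  refine (aa_upper β ρ r hβ0.le hr k).trans ?_
  rw [mul_assoc]
  gcongr
  linarith [(TT_bounds α β hα hβ ρ r k).1]

lemma TT_anti (α ρ r s : ℝ) (h : r ≤ s) (k : ℕ) : TT α ρ s k ≤ TT α ρ r k := by
  unfold TT; gcongr

lemma sum_strictAnti (α β : ℝ) (hα : 0 < α ∧ α < 1) (hβ : β = 1 / α) (ρ r s : ℝ) (hr : 0 < r)
    (h : r < s) : ∑' k, TT α ρ s k < ∑' k, TT α ρ r k := by
  refine Summable.tsum_lt_tsum (i := 1) (TT_anti α ρ r s h.le) ?_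
    (TT_summable α β hα hβ ρ s (hr.trans h)) (TT_summable α β hα hβ ρ r hr)
  have hg := (g_bounds α β hα hβ 1 le_rfl).1
  have : (0:ℝ) < (1:ℕ) * g α 1 := lt_of_lt_of_le (by simp) hg
  unfold TT
  gcongr

lemma sum_cont (α β : ℝ) (hα : 0 < α ∧ α < 1) (hβ : β = 1 / α) (ρ a : ℝ) (ha : 0 < a) :
    ContinuousOn (fun r => ∑' k, TT α ρ r k) (Set.Ici a) := by
  refine continuousOn_tsum (u := TT α ρ a) ?_ (TT_summable α β hα hβ ρ a ha) ?_
  · intro k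
    apply Continuous.continuousOn
    unfold TT
    refine Continuous.div (by fun_prop) (by fun_prop) ?_
    intro x; positivity
  · intro k x hx
    rw [Real.norm_of_nonneg (TT_nonneg _ _ _ _)]
    exact TT_anti _ _ _ _ hx k

/-- Lemma (unique saddle point in `r`): for every `n ≥ 1` and fixed `ρ` there is a unique
`r > 0` with `n = ∑_{k≥1} k g(k)/(e^{kr−ρ}+1)`; moreover
`n ≍ (−Li_{β+1}(−e^ρ)) r^{−(β+1)}` with constants depending only on `β`. -/
theorem unique_r (α β : ℝ) (hα : 0 < α ∧ α < 1) (hβ : β = 1 / α) :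
    (∀ n : ℕ, 1 ≤ n → ∀ ρ : ℝ, ∃! r : ℝ, 0 < r ∧
      (n : ℝ) = ∑' k : ℕ, (k : ℝ) * g α k / (Real.exp (k * r - ρ) + 1)) ∧
    ∃ γ₁ > (0:ℝ), ∃ γ₂ > (0:ℝ), ∀ n : ℕ, 1 ≤ n → ∀ ρ r : ℝ, 0 < r →
      (n : ℝ) = (∑' k : ℕ, (k : ℝ) * g α k / (Real.exp (k * r - ρ) + 1)) →
      γ₁ * (-negLi (β + 1) (Real.exp ρ)) * r ^ (-(β + 1)) ≤ (n : ℝ) ∧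
      (n : ℝ) ≤ γ₂ * (-negLi (β + 1) (Real.exp ρ)) * r ^ (-(β + 1)) := by
  have hβ0 : 0 < β := by rw [hβ]; exact one_div_pos.2 hα.1
  have hG : 0 < Real.Gamma (β + 1) := Real.Gamma_pos_of_pos (by linarith)
  constructor
  · intro n hn ρ
    have hn1 : (1:ℝ) ≤ n := by exact_mod_cast hn
    have hI := II_pos β ρ hβ0.le
    change ∃! r : ℝ, 0 < r ∧ (n : ℝ) = ∑' k : ℕ, TT α ρ r k
    -- solve I * r^(-(β+1)) = y
    have key : ∀ y : ℝ, 0 < y → ∃ r : ℝ, 0 < r ∧ II β ρ * r ^ (-(β + 1)) = y := by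
      intro y hy
      refine ⟨(y / II β ρ) ^ (-(β + 1))⁻¹, by positivity, ?_⟩
      rw [Real.rpow_inv_rpow (by positivity) (by linarith)]
      field_simp
    set C := (2 * β * 2 ^ β * 2 ^ (β + 1)) with hC
    have hC0 : 0 < C := by positivity
    have hD0 : (0:ℝ) < 2 ^ β * 2 := by positivity
    obtain ⟨a, ha, hae⟩ := key (1 + 2 ^ β * 2 * (n + 1)) (by positivity)
    obtain ⟨b, hb, hbe⟩ := key (1 / (2 * C)) (by positivity)
    have h1 : (n:ℝ) < ∑' k, TT α ρ a k := by
      have := sum_lower α β hα hβ ρ a ha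
      rw [hae] at this
      have h' := le_of_mul_le_mul_left (by linarith : (2 ^ β * 2) * ((n:ℝ) + 1) ≤ 2 ^ β * 2 * ∑' k, TT α ρ a k) hD0
      linarith
    have h2 : ∑' k, TT α ρ b k < n := by
      have := sum_upper α β hα hβ ρ b hb
      rw [hbe, ← hC] at this
      have h' : C * (1 / (2 * C)) = 1 / 2 := by field_simp
      linarith
    have hab : a ≤ b := by
      by_contra hlt
      have := sum_strictAnti α β hα hβ ρ b a hb (not_le.1 hlt)
      linarith
    obtain ⟨r, hr, hre⟩ := intermediate_value_Icc' hab
      ((sum_cont α β hα hβ ρ a ha).mono Set.Icc_subset_Ici_self) ⟨h2.le, h1.le⟩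
    have hr0 : 0 < r := ha.trans_le hr.1
    refine ⟨r, ⟨hr0, hre.symm⟩, ?_⟩
    rintro s ⟨hs, hse⟩
    simp only at hre
    rcases lt_trichotomy s r with h | h | h
    · have := sum_strictAnti α β hα hβ ρ s r hs h
      linarith
    · exact h
    · have := sum_strictAnti α β hα hβ ρ r s hr0 h
      linarith
  · refine ⟨Real.Gamma (β + 1) / (1 + 2 ^ β * 2), by positivity,
      (2 * β * 2 ^ β * 2 ^ (β + 1)) * Real.Gamma (β + 1), by positivity, ?_⟩
    intro n hn ρ r hr h
    have hn1 : (1:ℝ) ≤ n := by exact_mod_cast hn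
    change (n : ℝ) = ∑' k : ℕ, TT α ρ r k at h
    have hl := sum_lower α β hα hβ ρ r hr
    have hu := sum_upper α β hα hβ ρ r hr
    rw [← h] at hl hu
    rw [negLi_eq β ρ hβ0]
    constructor
    · have e : Real.Gamma (β + 1) / (1 + 2 ^ β * 2) * (II β ρ / Real.Gamma (β + 1)) * r ^ (-(β + 1))
          = (II β ρ * r ^ (-(β + 1))) / (1 + 2 ^ β * 2) := by field_simp
      rw [e, div_le_iff₀ (by positivity)]
      linarith
    · have e : (2 * β * 2 ^ β * 2 ^ (β + 1)) * Real.Gamma (β + 1) * (II β ρ / Real.Gamma (β + 1))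
          * r ^ (-(β + 1)) = (2 * β * 2 ^ β * 2 ^ (β + 1)) * (II β ρ * r ^ (-(β + 1))) := by
        field_simp
      rw [e]; exact hu
end

section
/- Let 0<α<1 and let n≥1 be an integer. Let r:ℝ→(0,∞) be the (differentiable) implicit function satisfying n = ∑_{k≥1} k·g(k)/(e^{k·r(ρ)−ρ}+1) for all ρ∈ℝ. Then the function S(ρ) := ∑_{k≥1} g(k)/(e^{k·r(ρ)−ρ}+1) is strictly increasing on ℝ; indeed S'(ρ) = δ(r(ρ),ρ)/f''_{20}(r(ρ),ρ) > 0. -/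
open Real

/-- the mixed partial derivative `∂^{p+q} f/∂τ^p∂σ^q` of
`f(τ,σ) = ∑_{k≥1} g(k) log(1+e^{σ−kτ})` -/
noncomputable def fpartial (α : ℝ) (p q : ℕ) (τ σ : ℝ) : ℝ :=
  iteratedDeriv p (fun τ' : ℝ => iteratedDeriv q
    (fun σ' : ℝ => ∑' k : ℕ, (g α k : ℝ) * Real.log (1 + Real.exp (σ' - k * τ'))) σ) τ

def EB (c : ℕ → ℝ) : Prop := ∀ a : ℝ, 0 < a → Summable (fun n : ℕ => |c n| * Real.exp (-(a * n)))

lemma EB.mulk {c : ℕ → ℝ} (h : EB c) : EB (fun n => (n : ℝ) * c n) := by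
  intro a ha
  refine Summable.of_nonneg_of_le (fun n => by positivity) (fun n => ?_) ((h (a/2) (by positivity)).mul_left (2/a))
  rw [abs_mul, Nat.abs_cast]
  have h1 : (a/2 * n) ≤ Real.exp (a/2*n) := by
    linarith [Real.add_one_le_exp (a/2*n : ℝ)]
  have h2 : (n : ℝ) ≤ 2/a * Real.exp (a/2*n) := by
    rw [div_mul_eq_mul_div, le_div_iff₀ ha]; linarith
  have h3 : Real.exp (a/2*n) * Real.exp (-(a*n)) = Real.exp (-(a/2*n)) := by
    rw [← Real.exp_add]; congr 1; ring
  calc (n:ℝ) * |c n| * Real.exp (-(a*n)) ≤ (2/a * Real.exp (a/2*n)) * |c n| * Real.exp (-(a*n)) := by gcongr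
    _ = 2/a * (|c n| * (Real.exp (a/2*n) * Real.exp (-(a*n)))) := by ring
    _ = _ := by rw [h3]

lemma EB.summ {c : ℕ → ℝ} (h : EB c) {φ : ℝ → ℝ} (hφ : ∀ x, |φ x| ≤ Real.exp x) {τ : ℝ} (hτ : 0 < τ) (σ : ℝ) :
    Summable (fun n : ℕ => c n * φ (σ - n * τ)) := by
  refine Summable.of_norm_bounded ((h τ hτ).mul_left (Real.exp σ)) (fun n => ?_)
  rw [Real.norm_eq_abs, abs_mul]
  have : Real.exp (σ - n * τ) = Real.exp σ * Real.exp (-(τ * n)) := by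
    rw [← Real.exp_add]; congr 1; ring
  have h1 := hφ (σ - n * τ)
  rw [this] at h1
  calc |c n| * |φ (σ - n * τ)| ≤ |c n| * (Real.exp σ * Real.exp (-(τ * n))) := by gcongr
    _ = _ := by ring

lemma EB.hasFDeriv {c : ℕ → ℝ} (h : EB c) {φ ψ : ℝ → ℝ} (hφ : ∀ x, |φ x| ≤ Real.exp x)
    (hψ : ∀ x, |ψ x| ≤ Real.exp x) (hd : ∀ x, HasDerivAt φ (ψ x) x) {τ : ℝ} (hτ : 0 < τ) (σ : ℝ) :
    HasFDerivAt (fun p : ℝ × ℝ => ∑' n : ℕ, c n * φ (p.2 - n * p.1))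
      ((∑' n : ℕ, c n * ψ (σ - n * τ)) • ContinuousLinearMap.snd ℝ ℝ ℝ
        - (∑' n : ℕ, (n * c n) * ψ (σ - n * τ)) • ContinuousLinearMap.fst ℝ ℝ ℝ) (τ, σ) := by
  let f' : ℕ → ℝ × ℝ → (ℝ × ℝ →L[ℝ] ℝ) := fun n p =>
    (c n * ψ (p.2 - n * p.1)) • ContinuousLinearMap.snd ℝ ℝ ℝ - ((n * c n) * ψ (p.2 - n * p.1)) • ContinuousLinearMap.fst ℝ ℝ ℝ
  have hs0 := h.summ hψ hτ σ
  have hs1 := h.mulk.summ hψ hτ σ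
  have key : HasFDerivAt (fun p : ℝ × ℝ => ∑' n : ℕ, c n * φ (p.2 - n * p.1)) (∑' n, f' n (τ, σ)) (τ, σ) := by
    have hu : Summable (fun n : ℕ => Real.exp (σ+1) * (|c n| * Real.exp (-(τ/2 * n))) + Real.exp (σ+1) * (|n * c n| * Real.exp (-(τ/2 * n)))) :=
      ((h (τ/2) (by positivity)).mul_left _).add ((h.mulk (τ/2) (by positivity)).mul_left _)
    refine hasFDerivAt_tsum_of_isPreconnected (s := Set.Ioi (τ/2) ×ˢ Set.Iio (σ+1)) (x₀ := (τ, σ)) hu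
      (isOpen_Ioi.prod isOpen_Iio) ((convex_Ioi _).prod (convex_Iio _)).isPreconnected ?_ ?_ ?_ ?_ ?_
    · intro n p _
      have h1 : HasFDerivAt (fun p : ℝ × ℝ => p.2 - n * p.1) (ContinuousLinearMap.snd ℝ ℝ ℝ - (n:ℝ) • ContinuousLinearMap.fst ℝ ℝ ℝ) p :=
        hasFDerivAt_snd.sub (hasFDerivAt_fst.const_mul _)
      have h2 := ((hd (p.2 - n * p.1)).comp_hasFDerivAt p h1).const_mul (c n)
      refine HasFDerivAt.congr_fderiv (f := fun p : ℝ × ℝ => c n * φ (p.2 - n * p.1)) h2 ?_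
      ext <;> simp [f'] <;> ring
    · rintro n ⟨x, y⟩ ⟨hx, hy⟩
      simp only [Set.mem_Ioi, Set.mem_Iio] at hx hy
      have e : |ψ (y - n * x)| ≤ Real.exp (σ+1) * Real.exp (-(τ/2 * n)) := by
        refine (hψ _).trans ?_
        rw [← Real.exp_add]
        apply Real.exp_le_exp.2
        have : (n:ℝ) * (τ/2) ≤ n * x := by gcongr
        linarith
      refine (norm_sub_le _ _).trans (add_le_add ?_ ?_)
      · rw [norm_smul]
        have := ContinuousLinearMap.norm_snd_le ℝ ℝ ℝ
        rw [Real.norm_eq_abs, abs_mul]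
        calc _ ≤ |c n| * (Real.exp (σ+1) * Real.exp (-(τ/2 * n))) * 1 := by gcongr
          _ = _ := by ring
      · rw [norm_smul]
        have := ContinuousLinearMap.norm_fst_le ℝ ℝ ℝ
        rw [Real.norm_eq_abs, abs_mul]
        calc _ ≤ |n * c n| * (Real.exp (σ+1) * Real.exp (-(τ/2 * n))) * 1 := by gcongr
          _ = _ := by ring
    · exact ⟨by simp; linarith, by simp⟩
    · exact h.summ hφ hτ σ
    · exact ⟨by simp; linarith, by simp⟩
  convert key using 1
  exact ((hs0.hasSum.smul_const _).sub (hs1.hasSum.smul_const _)).tsum_eq.symm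

lemma EB.comp {c : ℕ → ℝ} (h : EB c) {φ ψ : ℝ → ℝ} (hφ : ∀ x, |φ x| ≤ Real.exp x)
    (hψ : ∀ x, |ψ x| ≤ Real.exp x) (hd : ∀ x, HasDerivAt φ (ψ x) x) {u v : ℝ → ℝ} {u' v' t : ℝ}
    (hu : HasDerivAt u u' t) (hv : HasDerivAt v v' t) (hτ : 0 < u t) :
    HasDerivAt (fun s => ∑' n : ℕ, c n * φ (v s - n * u s))
      ((∑' n : ℕ, c n * ψ (v t - n * u t)) * v' - (∑' n : ℕ, (n * c n) * ψ (v t - n * u t)) * u') t := by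
  have := (h.hasFDeriv hφ hψ hd hτ (v t)).comp_hasDerivAt t (hu.prodMk hv)
  refine HasDerivAt.congr_deriv (f := fun s => ∑' n : ℕ, c n * φ (v s - n * u s)) this ?_
  simp

noncomputable def ph0 (x : ℝ) : ℝ := Real.log (1 + Real.exp x)
noncomputable def ph1 (x : ℝ) : ℝ := 1 / (Real.exp (-x) + 1)
noncomputable def ph2 (x : ℝ) : ℝ := Real.exp (-x) / (Real.exp (-x) + 1)^2

lemma ph0_le (x : ℝ) : |ph0 x| ≤ Real.exp x := by
  have := Real.exp_pos x
  rw [ph0, abs_of_nonneg (Real.log_nonneg (by linarith))]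
  linarith [Real.log_le_sub_one_of_pos (show 0 < 1 + Real.exp x by linarith)]
lemma ph1_le (x : ℝ) : |ph1 x| ≤ Real.exp x := by
  have := Real.exp_pos x
  rw [ph1, abs_of_nonneg (by positivity), Real.exp_neg, div_le_iff₀ (by positivity), mul_add, mul_inv_cancel₀ this.ne']
  linarith
lemma ph2_pos (x : ℝ) : 0 < ph2 x := by unfold ph2; positivity
lemma ph2_le (x : ℝ) : |ph2 x| ≤ Real.exp x := by
  have h := Real.exp_pos x
  have h' := Real.exp_pos (-x)
  have e : Real.exp x * Real.exp (-x) = 1 := by rw [← Real.exp_add]; simp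
  rw [abs_of_pos (ph2_pos x), ph2, div_le_iff₀ (by positivity)]
  have : Real.exp x * (Real.exp (-x) + 1)^2 = (Real.exp x * Real.exp (-x)) * Real.exp (-x) + 2 * (Real.exp x * Real.exp (-x)) + Real.exp x := by ring
  rw [this, e]; linarith
lemma ph0_d (x : ℝ) : HasDerivAt ph0 (ph1 x) x := by
  have h := Real.exp_pos x
  have := ((Real.hasDerivAt_exp x).const_add 1).log (by positivity)
  refine HasDerivAt.congr_deriv (f := ph0) this ?_
  rw [ph1, Real.exp_neg]; field_simp
lemma ph1_d (x : ℝ) : HasDerivAt ph1 (ph2 x) x := by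
  have h := Real.exp_pos (-x)
  have := (((hasDerivAt_neg x).exp).add_const 1).inv (by positivity)
  have e : ph1 = (fun x => Real.exp (-x) + 1)⁻¹ := by ext y; simp [ph1]
  rw [e]
  refine this.congr_deriv ?_
  rw [ph2]; simp

lemma g_finite {α : ℝ} (hα : 0 < α) (k : ℕ) :
    {n : ℕ | 1 ≤ n ∧ ⌊(n : ℝ) ^ α⌋ = (k : ℤ)} ⊆ Finset.range ((k+1)^(⌈1/α⌉₊)) := by
  rintro n ⟨h1, h2⟩
  simp only [Finset.coe_range, Set.mem_Iio]
  have h3 := Int.lt_floor_add_one ((n:ℝ)^α)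
  rw [h2] at h3
  have hn : (0:ℝ) ≤ n := by positivity
  have h4 : (n:ℝ) < ((k:ℝ)+1)^(1/α) := by
    have := Real.rpow_lt_rpow (by positivity) h3 (show 0 < 1/α by positivity)
    rw [← Real.rpow_mul hn, mul_one_div_cancel hα.ne', Real.rpow_one] at this
    simpa using this
  have h5 : ((k:ℝ)+1)^(1/α) ≤ ((k:ℝ)+1)^(⌈1/α⌉₊ : ℝ) :=
    Real.rpow_le_rpow_of_exponent_le (by linarith [(Nat.cast_nonneg k : (0:ℝ) ≤ k)]) (Nat.le_ceil _)
  rw [Real.rpow_natCast] at h5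
  exact_mod_cast h4.trans_le h5

lemma g_EB {α : ℝ} (hα : 0 < α) : EB (fun k => (g α k : ℝ)) := by
  intro a ha
  have hs := (summable_nat_add_iff 1).2 (Real.summable_pow_mul_exp_neg_nat_mul ⌈1/α⌉₊ ha)
  refine Summable.of_nonneg_of_le (fun n => by positivity) (fun n => ?_) (hs.mul_left (Real.exp a))
  have h1 : g α n ≤ (n+1)^(⌈1/α⌉₊) := by
    have := Set.ncard_le_ncard (g_finite hα n) (Finset.finite_toSet _)
    rw [Set.ncard_coe_finset, Finset.card_range] at this
    exact this
  have h2 : (g α n : ℝ) ≤ ((n:ℝ)+1)^(⌈1/α⌉₊) := by exact_mod_cast h1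
  rw [Nat.abs_cast]
  have h3 : Real.exp (-(a*n)) = Real.exp a * Real.exp (-a * ((n+1:ℕ):ℝ)) := by
    rw [← Real.exp_add]; congr 1; push_cast; ring
  rw [h3]
  push_cast
  calc _ ≤ ((n:ℝ)+1)^(⌈1/α⌉₊) * (Real.exp a * Real.exp (-a * ((n:ℝ)+1))) := by gcongr
    _ = _ := by ring

lemma g_pos {α : ℝ} (hα : 0 < α) {n k : ℕ} (h1 : 1 ≤ n) (h2 : ⌊(n : ℝ) ^ α⌋ = (k : ℤ)) : 0 < g α k :=
  (Set.ncard_pos ((Finset.finite_toSet _).subset (g_finite hα k))).2 ⟨n, h1, h2⟩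

lemma g_two {α : ℝ} (hα : 0 < α) : 0 < g α 1 ∧ ∃ k, 2 ≤ k ∧ 0 < g α k := by
  refine ⟨g_pos hα le_rfl (by simp), ?_⟩
  have h0 : (2:ℝ)^(1/α) ≤ ⌈(2:ℝ)^(1/α)⌉₊ := Nat.le_ceil _
  set n := ⌈(2:ℝ)^(1/α)⌉₊
  have hp : (0:ℝ) < 2^(1/α) := by positivity
  have h1 : 1 ≤ n := by
    have : (0:ℝ) < n := by linarith
    exact_mod_cast this
  have h2 : (2:ℝ) ≤ (n:ℝ)^α := by
    have := Real.rpow_le_rpow hp.le h0 hα.le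
    rwa [← Real.rpow_mul (by norm_num), one_div_mul_cancel hα.ne', Real.rpow_one] at this
  have h3 : (2:ℤ) ≤ ⌊(n:ℝ)^α⌋ := Int.le_floor.2 (by exact_mod_cast h2)
  refine ⟨⌊(n:ℝ)^α⌋.toNat, by omega, g_pos hα h1 (by omega)⟩

/-- moments of the weight -/
noncomputable def mom (α τ σ : ℝ) : ℝ := ∑' n : ℕ, (g α n : ℝ) * ph2 (σ - n * τ)
noncomputable def mom1 (α τ σ : ℝ) : ℝ := ∑' n : ℕ, ((n:ℝ) * (g α n : ℝ)) * ph2 (σ - n * τ)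
noncomputable def mom2 (α τ σ : ℝ) : ℝ := ∑' n : ℕ, ((n:ℝ) * ((n:ℝ) * (g α n : ℝ))) * ph2 (σ - n * τ)

lemma f02 {α : ℝ} (hα : 0 < α) {τ : ℝ} (hτ : 0 < τ) (σ : ℝ) : fpartial α 0 2 τ σ = mom α τ σ := by
  have hg := g_EB hα
  simp only [fpartial, iteratedDeriv_zero]
  rw [iteratedDeriv_succ, iteratedDeriv_one]
  have h1 : deriv (fun s => ∑' k : ℕ, (g α k : ℝ) * Real.log (1 + Real.exp (s - k * τ))) =
      fun s => ∑' k : ℕ, (g α k : ℝ) * ph1 (s - k * τ) := by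
    ext s
    have := hg.comp ph0_le ph1_le ph0_d (hasDerivAt_const s τ) (hasDerivAt_id s) hτ
    simpa [ph0] using this.deriv
  rw [h1]
  have := hg.comp ph1_le ph2_le ph1_d (hasDerivAt_const σ τ) (hasDerivAt_id σ) hτ
  simpa [mom] using this.deriv

lemma f11 {α : ℝ} (hα : 0 < α) {τ : ℝ} (hτ : 0 < τ) (σ : ℝ) : fpartial α 1 1 τ σ = - mom1 α τ σ := by
  have hg := g_EB hα
  simp only [fpartial, iteratedDeriv_one]
  have h1 : (fun t => deriv (fun s => ∑' k : ℕ, (g α k : ℝ) * Real.log (1 + Real.exp (s - k * t))) σ) =ᶠ[nhds τ]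
      fun t => ∑' k : ℕ, (g α k : ℝ) * ph1 (σ - k * t) := by
    filter_upwards [lt_mem_nhds hτ] with t ht
    have := hg.comp ph0_le ph1_le ph0_d (hasDerivAt_const σ t) (hasDerivAt_id σ) ht
    simpa [ph0] using this.deriv
  rw [h1.deriv_eq]
  have := hg.comp ph1_le ph2_le ph1_d (hasDerivAt_id τ) (hasDerivAt_const τ σ) hτ
  simpa [mom1] using this.deriv

lemma f20 {α : ℝ} (hα : 0 < α) {τ : ℝ} (hτ : 0 < τ) (σ : ℝ) : fpartial α 2 0 τ σ = mom2 α τ σ := by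
  have hg := g_EB hα
  simp only [fpartial, iteratedDeriv_zero]
  rw [iteratedDeriv_succ, iteratedDeriv_one]
  have h1 : deriv (fun t => ∑' k : ℕ, (g α k : ℝ) * Real.log (1 + Real.exp (σ - k * t))) =ᶠ[nhds τ]
      fun t => - ∑' k : ℕ, ((k:ℝ) * (g α k : ℝ)) * ph1 (σ - k * t) := by
    filter_upwards [lt_mem_nhds hτ] with t ht
    have := hg.comp ph0_le ph1_le ph0_d (hasDerivAt_id t) (hasDerivAt_const t σ) ht
    simpa [ph0] using this.deriv
  rw [h1.deriv_eq]
  have := (hg.mulk.comp ph1_le ph2_le ph1_d (hasDerivAt_id τ) (hasDerivAt_const τ σ) hτ).neg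
  simpa [mom2] using this.deriv

lemma quad_pos {α : ℝ} (hα : 0 < α) {τ : ℝ} (hτ : 0 < τ) (σ x : ℝ) :
    0 < mom2 α τ σ - 2 * x * mom1 α τ σ + x^2 * mom α τ σ := by
  have hg := g_EB hα
  have s0 := (hg.summ ph2_le hτ σ).hasSum
  have s1 := (hg.mulk.summ ph2_le hτ σ).hasSum
  have s2 := (hg.mulk.mulk.summ ph2_le hτ σ).hasSum
  have s := (s2.sub (s1.mul_left (2*x))).add (s0.mul_left (x^2))
  have s' : HasSum (fun n : ℕ => ((n:ℝ) - x)^2 * ((g α n : ℝ) * ph2 (σ - n * τ)))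
      (mom2 α τ σ - 2 * x * mom1 α τ σ + x^2 * mom α τ σ) := by
    have e : (fun n : ℕ => ((n:ℝ) - x)^2 * ((g α n : ℝ) * ph2 (σ - n * τ))) = _ :=
      funext fun n => by
        show _ = (n:ℝ) * ((n:ℝ) * (g α n : ℝ)) * ph2 (σ - n * τ) - 2 * x * ((n:ℝ) * (g α n : ℝ) * ph2 (σ - n * τ)) + x^2 * ((g α n : ℝ) * ph2 (σ - n * τ))
        ring
    rw [e]
    exact s
  rw [← s'.tsum_eq]
  have nn : ∀ n : ℕ, 0 ≤ ((n:ℝ) - x)^2 * ((g α n : ℝ) * ph2 (σ - n * τ)) := fun n => by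
    have := ph2_pos (σ - n * τ)
    positivity
  have pp : ∀ n : ℕ, 0 < g α n → (n:ℝ) ≠ x → 0 < ((n:ℝ) - x)^2 * ((g α n : ℝ) * ph2 (σ - n * τ)) := fun n h1 h2 => by
    have := ph2_pos (σ - n * τ)
    have : (n:ℝ) - x ≠ 0 := sub_ne_zero.2 h2
    positivity
  obtain ⟨a, k, hk, b⟩ := g_two hα
  by_cases hx : ((1:ℕ):ℝ) = x
  · refine s'.summable.tsum_pos nn k (pp k b ?_)
    rw [← hx]
    exact_mod_cast (by omega : k ≠ 1)
  · exact s'.summable.tsum_pos nn 1 (pp 1 a hx)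

lemma mom_pos {α : ℝ} (hα : 0 < α) {τ : ℝ} (hτ : 0 < τ) (σ : ℝ) : 0 < mom α τ σ := by
  refine ((g_EB hα).summ ph2_le hτ σ).tsum_pos (fun n => ?_) 1 ?_
  · have := ph2_pos (σ - n * τ)
    positivity
  · have := ph2_pos (σ - (1:ℕ) * τ)
    have := (g_two hα).1
    positivity

/-- `S(ρ) = ∑_{k≥1} g(k)/(e^{k r(ρ) − ρ}+1)` is strictly increasing, with
`S'(ρ) = δ(r(ρ),ρ)/f''_{20}(r(ρ),ρ) > 0`, where `r(ρ)` is the implicit function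
solving `n = ∑_{k≥1} k g(k)/(e^{k r(ρ) − ρ}+1)`. -/
theorem S_strictMono (α : ℝ) (hα : 0 < α ∧ α < 1) (n : ℕ) (hn : 1 ≤ n)
    (r : ℝ → ℝ) (hrpos : ∀ ρ : ℝ, 0 < r ρ) (hrdiff : Differentiable ℝ r)
    (hreq : ∀ ρ : ℝ, (n : ℝ) = ∑' k : ℕ, (k : ℝ) * g α k / (Real.exp (k * r ρ - ρ) + 1)) :
    StrictMono (fun ρ : ℝ => ∑' k : ℕ, (g α k : ℝ) / (Real.exp (k * r ρ - ρ) + 1)) ∧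
    ∀ ρ : ℝ,
      HasDerivAt (fun ρ' : ℝ => ∑' k : ℕ, (g α k : ℝ) / (Real.exp (k * r ρ' - ρ') + 1))
        ((fpartial α 2 0 (r ρ) ρ * fpartial α 0 2 (r ρ) ρ - (fpartial α 1 1 (r ρ) ρ) ^ 2)
          / fpartial α 2 0 (r ρ) ρ) ρ ∧
      0 < (fpartial α 2 0 (r ρ) ρ * fpartial α 0 2 (r ρ) ρ - (fpartial α 1 1 (r ρ) ρ) ^ 2)
          / fpartial α 2 0 (r ρ) ρ := by
  have ha := hα.1
  have hg := g_EB ha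
  have main : ∀ ρ : ℝ,
      HasDerivAt (fun ρ' : ℝ => ∑' k : ℕ, (g α k : ℝ) / (Real.exp (k * r ρ' - ρ') + 1))
        ((fpartial α 2 0 (r ρ) ρ * fpartial α 0 2 (r ρ) ρ - (fpartial α 1 1 (r ρ) ρ) ^ 2)
          / fpartial α 2 0 (r ρ) ρ) ρ ∧
      0 < (fpartial α 2 0 (r ρ) ρ * fpartial α 0 2 (r ρ) ρ - (fpartial α 1 1 (r ρ) ρ) ^ 2)
          / fpartial α 2 0 (r ρ) ρ := by
    intro ρ
    rw [f20 ha (hrpos ρ), f02 ha (hrpos ρ), f11 ha (hrpos ρ)]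
    have p2 : 0 < mom2 α (r ρ) ρ := by simpa using quad_pos ha (hrpos ρ) ρ 0
    have p0 := mom_pos ha (hrpos ρ) ρ
    have q := quad_pos ha (hrpos ρ) ρ (mom1 α (r ρ) ρ / mom α (r ρ) ρ)
    have d1 := hg.comp ph1_le ph2_le ph1_d (hrdiff ρ).hasDerivAt (hasDerivAt_id ρ) (hrpos ρ)
    have d2 := hg.mulk.comp ph1_le ph2_le ph1_d (hrdiff ρ).hasDerivAt (hasDerivAt_id ρ) (hrpos ρ)
    have e2 : (fun s => ∑' k : ℕ, ((k:ℝ) * (g α k : ℝ)) * ph1 (id s - k * r s)) = fun _ => (n : ℝ) := by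
      ext s
      rw [hreq s]
      simp [ph1, div_eq_mul_inv]
    rw [e2] at d2
    have z := d2.unique (hasDerivAt_const ρ (n:ℝ))
    simp only [id, mul_one] at z d1
    change mom1 α (r ρ) ρ - mom2 α (r ρ) ρ * deriv r ρ = 0 at z
    constructor
    · convert d1 using 1
      · ext s
        simp [ph1, div_eq_mul_inv]
      · change _ = mom α (r ρ) ρ - mom1 α (r ρ) ρ * deriv r ρ
        rw [div_eq_iff p2.ne']
        linear_combination (- mom1 α (r ρ) ρ) * z
    · apply div_pos _ p2
      have := mul_pos q p0
      field_simp at this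
      nlinarith
  refine ⟨strictMono_of_hasDerivAt_pos (fun ρ => (main ρ).1) (fun ρ => (main ρ).2), main⟩
end

section
/- Let γ>0. Then as real u→+∞ one has Li_γ(−u) = −(log u)^γ/Γ(γ+1)·(1 + O((log u)^{−2})), i.e., there exist constants C>0 and u₀>1 such that |Li_γ(−u) + (log u)^γ/Γ(γ+1)| ≤ C·(log u)^{γ−2} for all u ≥ u₀. -/
open Real

open MeasureTheory Set in
lemma aux_lip (a : ℝ) : ∃ C > (0:ℝ), ∀ x ∈ Icc (1/2:ℝ) (3/2), |x ^ a - 1| ≤ C * |x - 1| := by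
  obtain ⟨C, hC⟩ := (isCompact_Icc (a := (1/2:ℝ)) (b := 3/2)).exists_bound_of_continuousOn
    (f := fun x : ℝ => a * x ^ (a - 1)) (by
      intro x hx
      have : x ≠ 0 := by have := hx.1; intro h; subst h; norm_num at this
      exact (continuousAt_const.mul (continuousAt_id.rpow_const (Or.inl this))).continuousWithinAt)
  refine ⟨|C| + 1, by positivity, fun x hx => ?_⟩
  have h := (convex_Icc (1/2:ℝ) (3/2)).norm_image_sub_le_of_norm_hasDerivWithin_le
    (f := fun x : ℝ => x ^ a) (f' := fun x : ℝ => a * x ^ (a - 1)) (C := C) (x := 1) (y := x)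
    (by
      intro x hx
      have : x ≠ 0 := by have := hx.1; intro h; subst h; norm_num at this
      exact (Real.hasDerivAt_rpow_const (Or.inl this)).hasDerivWithinAt) hC
    (by constructor <;> norm_num) hx
  simp only [Real.one_rpow, Real.norm_eq_abs] at h
  refine h.trans ?_
  gcongr
  linarith [le_abs_self C]

open MeasureTheory Set in
lemma aux_exp (L y : ℝ) (hL : 1 ≤ L) (hy : 1/2 ≤ y) :
    rexp (-(L * y)) ≤ 32 / L ^ 2 * rexp (-y / 2) := by
  have h1 : (L * y / 2) ^ 2 / 2 ≤ rexp (L * y / 2) := by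
    have := Real.quadratic_le_exp_of_nonneg (x := L * y / 2) (by positivity)
    have : 0 ≤ L * y / 2 := by positivity
    linarith
  have h2 : L ^ 2 ≤ 32 * rexp (L * y / 2) := by
    have : (1/2) ^ 2 ≤ y ^ 2 := by gcongr
    nlinarith [sq_nonneg L]
  have h3 : rexp (-(L * y)) * rexp (L * y / 2) ≤ rexp (-y / 2) := by
    rw [← Real.exp_add]
    apply Real.exp_le_exp.mpr
    nlinarith
  rw [div_mul_eq_mul_div, le_div_iff₀ (by positivity)]
  calc rexp (-(L * y)) * L ^ 2 ≤ rexp (-(L * y)) * (32 * rexp (L * y / 2)) := by gcongr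
    _ = 32 * (rexp (-(L * y)) * rexp (L * y / 2)) := by ring
    _ ≤ _ := by gcongr

lemma aux_int_abs : MeasureTheory.Integrable (fun y : ℝ => |y| * rexp (-|y|)) := by
  have h : MeasureTheory.IntegrableOn (fun y : ℝ => y * rexp (-y)) (Set.Ioi 0) := by
    have := Real.GammaIntegral_convergent (s := 2) (by norm_num)
    refine this.congr_fun (fun x hx => ?_) measurableSet_Ioi
    norm_num
    ring
  have hf : MeasureTheory.IntegrableOn (fun y : ℝ => |y| * rexp (-|y|)) (Set.Ioi 0) := by
    refine h.congr_fun (fun x hx => ?_) measurableSet_Ioi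
    have hx : 0 < x := hx
    simp only [abs_of_pos hx]
  have int_Iic : MeasureTheory.IntegrableOn (fun y : ℝ => |y| * rexp (-|y|)) (Set.Iic 0) := by
    rw [← MeasureTheory.Measure.map_neg_eq_self (MeasureTheory.volume : MeasureTheory.Measure ℝ)]
    let m : MeasurableEmbedding fun x : ℝ => -x := (Homeomorph.neg ℝ).measurableEmbedding
    rw [m.integrableOn_map_iff]
    simp_rw [Function.comp_def, abs_neg, Set.neg_preimage, Set.neg_Iic, neg_zero]
    exact Iff.mpr integrableOn_Ici_iff_integrableOn_Ioi hf
  rw [← MeasureTheory.integrableOn_univ, ← Set.Iic_union_Ioi (a := (0:ℝ))]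
  exact int_Iic.union hf

lemma aux_int_pow (a : ℝ) (ha : -1 < a) :
    MeasureTheory.IntegrableOn (fun x : ℝ => x ^ a * rexp (-x / 2)) (Set.Ioi 0) := by
  have := integrableOn_rpow_mul_exp_neg_mul_rpow (s := a) (p := 1) (b := 1/2) ha one_pos (by norm_num)
  refine this.congr_fun (fun x hx => ?_) measurableSet_Ioi
  simp only [Real.rpow_one]
  congr 2
  ring

noncomputable def auxK (L x : ℝ) : ℝ := 1 / (rexp (L * (x - 1)) + 1)

lemma auxK_pos (L x : ℝ) : 0 < auxK L x := by unfold auxK; positivity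

lemma auxK_le_one (L x : ℝ) : auxK L x ≤ 1 := by
  unfold auxK
  rw [div_le_one (by positivity)]
  linarith [Real.exp_pos (L * (x - 1))]

lemma auxK_refl (L x : ℝ) : auxK L x + auxK L (2 - x) = 1 := by
  unfold auxK
  have : rexp (L * (2 - x - 1)) = (rexp (L * (x - 1)))⁻¹ := by
    rw [← Real.exp_neg]; congr 1; ring
  rw [this]
  have := Real.exp_pos (L * (x - 1))
  field_simp
  ring

lemma auxK_le (L x : ℝ) : auxK L x ≤ rexp (-(L * (x - 1))) := by
  unfold auxK
  rw [Real.exp_neg, ← one_div]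
  gcongr
  linarith

lemma auxK_cont (L : ℝ) : Continuous (auxK L) := by
  unfold auxK
  refine continuous_const.div (by fun_prop) (fun x => by positivity)

lemma auxK_int (L : ℝ) : ∫ x in (0:ℝ)..2, auxK L x = 1 := by
  have h1 : ∫ x in (0:ℝ)..2, auxK L (2 - x) = ∫ x in (0:ℝ)..2, auxK L x := by
    rw [intervalIntegral.integral_comp_sub_left]; norm_num
  have h2 : ∫ x in (0:ℝ)..2, (auxK L x + auxK L (2 - x)) = 2 := by
    simp [auxK_refl]
  have hc : Continuous fun x => auxK L (2 - x) :=
    (auxK_cont L).comp (continuous_const.sub continuous_id)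
  have h3 := intervalIntegral.integral_add ((auxK_cont L).intervalIntegrable
    (μ := MeasureTheory.volume) 0 2) (hc.intervalIntegrable 0 2)
  linarith

lemma auxE_le (L x : ℝ) (hL : 1 ≤ L) (h : 1/2 ≤ |x - 1|) :
    rexp (-(L * |x - 1|)) ≤ 64 / L ^ 2 * rexp (-x / 2) := by
  refine (aux_exp L _ hL h).trans ?_
  have h2 : rexp (1/2) ≤ 2 := by
    have h1 := Real.exp_one_lt_three
    have : rexp (1/2) * rexp (1/2) = rexp 1 := by rw [← Real.exp_add]; norm_num
    nlinarith [Real.exp_pos (1/2)]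
  have : rexp (-|x - 1| / 2) ≤ 2 * rexp (-x / 2) := by
    calc rexp (-|x - 1| / 2) ≤ rexp (1/2 + -x/2) := by
          apply Real.exp_le_exp.mpr; linarith [le_abs_self (x - 1)]
      _ = rexp (1/2) * rexp (-x/2) := by rw [Real.exp_add]
      _ ≤ _ := by gcongr
  calc 32 / L ^ 2 * rexp (-|x - 1| / 2) ≤ 32 / L ^ 2 * (2 * rexp (-x / 2)) := by gcongr
    _ = _ := by ring

open MeasureTheory Set in
lemma aux_main (γ : ℝ) (hγ : 0 < γ) : ∃ C > (0:ℝ), ∀ L : ℝ, 1 ≤ L →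
    |(∫ x in Ioi (0:ℝ), x ^ (γ - 1) * auxK L x) - 1 / γ| ≤ C / L ^ 2 := by
  obtain ⟨C1, hC1, hlip⟩ := aux_lip (γ - 1)
  set A := ∫ y : ℝ, |y| * rexp (-|y|) with hA
  set B := ∫ x in Ioi (0:ℝ), (x ^ (γ - 1) * rexp (-x / 2) + x ^ (0:ℝ) * rexp (-x / 2)) with hB
  have hA0 : 0 ≤ A := integral_nonneg (fun y => by positivity)
  have hB0 : 0 ≤ B := setIntegral_nonneg measurableSet_Ioi (fun x hx => by
    have : 0 < x := hx
    positivity)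
  refine ⟨C1 * A + 64 * B + 1, by positivity, fun L hL => ?_⟩
  have hL0 : 0 < L := by linarith
  -- integrability facts
  have iB : IntegrableOn (fun x : ℝ => x ^ (γ - 1) * rexp (-x / 2) + x ^ (0:ℝ) * rexp (-x / 2))
      (Ioi 0) := (aux_int_pow _ (by linarith)).add (aux_int_pow _ (by norm_num))
  have iA : Integrable (fun x : ℝ => |x - 1| * rexp (-(L * |x - 1|))) := by
    have := ((aux_int_abs.comp_mul_left' hL0.ne').comp_sub_right 1).const_mul L⁻¹
    refine this.congr (Filter.Eventually.of_forall fun x => ?_)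
    simp only [abs_mul, abs_of_pos hL0]
    field_simp
  have vA : ∫ x : ℝ, |x - 1| * rexp (-(L * |x - 1|)) = A / L ^ 2 := by
    have h1 : (fun x : ℝ => |x - 1| * rexp (-(L * |x - 1|))) =
        fun x => (fun y => L⁻¹ * (fun z => |z| * rexp (-|z|)) (L * y)) (x - 1) := by
      ext x
      simp only [abs_mul, abs_of_pos hL0]
      field_simp
    rw [h1, integral_sub_right_eq_self (fun y => L⁻¹ * (fun z => |z| * rexp (-|z|)) (L * y)) (1:ℝ),
      integral_const_mul, Measure.integral_comp_mul_left (fun z => |z| * rexp (-|z|)), ← hA,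
      abs_of_pos (by positivity), smul_eq_mul]
    field_simp
  have iP : IntegrableOn (fun x : ℝ => x ^ (γ - 1)) (Ioc 0 1) := by
    have := intervalIntegral.intervalIntegrable_rpow' (a := 0) (b := 1) (r := γ - 1) (by linarith)
    rwa [intervalIntegrable_iff_integrableOn_Ioc_of_le (by norm_num)] at this
  have vP : ∫ x in Ioc (0:ℝ) 1, x ^ (γ - 1) = 1 / γ := by
    rw [← intervalIntegral.integral_of_le (by norm_num), integral_rpow (Or.inl (by linarith))]
    simp [hγ.ne']
  have i1 : IntegrableOn (fun x : ℝ => (1:ℝ)) (Ioc 0 1) := by simp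
  have v1 : ∫ x in Ioc (0:ℝ) 1, (1:ℝ) = 1 := by simp
  have iK : IntegrableOn (auxK L) (Ioc 0 2) :=
    ((auxK_cont L).integrableOn_Icc (a := 0) (b := 2)).mono_set Ioc_subset_Icc_self
  have vK : ∫ x in Ioc (0:ℝ) 2, auxK L x = 1 := by
    rw [← intervalIntegral.integral_of_le (by norm_num), auxK_int]
  have iPK : IntegrableOn (fun x : ℝ => x ^ (γ - 1) * auxK L x) (Ioi 0) := by
    have hm : AEStronglyMeasurable (fun x : ℝ => x ^ (γ - 1) * auxK L x)
        (volume.restrict (Ioi 0)) := by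
      have := (auxK_cont L).measurable
      exact (by fun_prop : Measurable (fun x : ℝ => x ^ (γ - 1) * auxK L x)).aestronglyMeasurable
    refine Integrable.mono' ((aux_int_pow (γ - 1) (by linarith)).const_mul (64 + rexp 1)) hm ?_
    refine (ae_restrict_mem measurableSet_Ioi).mono fun x hx => ?_
    have hx : 0 < x := hx
    have hK := auxK_pos L x
    rw [Real.norm_of_nonneg (by positivity)]
    have : auxK L x ≤ (64 + rexp 1) * rexp (-x / 2) := by
      rcases le_or_gt x 2 with h | h
      · have h1 : 1 ≤ rexp 1 * rexp (-x/2) := by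
          rw [← Real.exp_add]; apply Real.one_le_exp; linarith
        have := auxK_le_one L x
        nlinarith [Real.exp_pos (-x/2)]
      · have h1 := auxE_le L x hL (by rw [abs_of_pos] <;> linarith)
        rw [abs_of_pos (by linarith)] at h1
        have h3 : 64 / L ^ 2 ≤ 64 := div_le_self (by norm_num) (one_le_pow₀ hL)
        have h2 := auxK_le L x
        calc auxK L x ≤ 64 / L ^ 2 * rexp (-x / 2) := h2.trans h1
          _ ≤ _ := by gcongr; linarith [Real.exp_pos 1]
    calc x ^ (γ - 1) * auxK L x ≤ x ^ (γ - 1) * ((64 + rexp 1) * rexp (-x / 2)) := by gcongr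
      _ = _ := by ring
  -- transfer to indicators on Ioi 0
  have tr : ∀ (f : ℝ → ℝ) (b : ℝ), ∫ x in Ioi (0:ℝ), (Iic b).indicator f x
      = ∫ x in Ioc 0 b, f x := by
    intro f b
    rw [setIntegral_indicator measurableSet_Iic, Ioi_inter_Iic]
  have tri : ∀ (f : ℝ → ℝ) (b : ℝ), IntegrableOn f (Ioc 0 b) →
      IntegrableOn ((Iic b).indicator f) (Ioi 0) := by
    intro f b h
    rw [IntegrableOn, integrable_indicator_iff measurableSet_Iic, IntegrableOn,
      Measure.restrict_restrict measurableSet_Iic, inter_comm, Ioi_inter_Iic]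
    exact h
  have key : (∫ x in Ioi (0:ℝ), x ^ (γ - 1) * auxK L x) - 1 / γ =
      ∫ x in Ioi (0:ℝ), ((x ^ (γ - 1) * auxK L x - (Iic 1).indicator (fun x => x ^ (γ - 1)) x)
        - ((Iic 2).indicator (auxK L) x - (Iic 1).indicator (fun _ => (1:ℝ)) x)) := by
    have e1 := integral_sub iPK (tri _ _ iP)
    have e2 := integral_sub (tri _ _ iK) (tri _ _ i1)
    have e3 := integral_sub (iPK.sub (tri _ _ iP)) ((tri _ _ iK).sub (tri _ _ i1))
    simp only [Pi.sub_apply] at e3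
    rw [e3, e1, e2, tr, tr, tr, vP, vK, v1]
    ring
  rw [key, ← Real.norm_eq_abs]
  have bd := norm_integral_le_of_norm_le (μ := volume.restrict (Ioi (0:ℝ)))
    (f := fun x : ℝ => ((x ^ (γ - 1) * auxK L x - (Iic 1).indicator (fun x => x ^ (γ - 1)) x)
        - ((Iic 2).indicator (auxK L) x - (Iic 1).indicator (fun _ => (1:ℝ)) x)))
    ((iA.integrableOn.const_mul C1).add (iB.const_mul (64 / L ^ 2))) ?_
  · refine bd.trans ?_
    simp only [Pi.add_apply]
    rw [integral_add (iA.integrableOn.const_mul C1) (iB.const_mul (64 / L ^ 2)),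
      integral_const_mul, integral_const_mul, ← hB]
    have : ∫ x in Ioi (0:ℝ), |x - 1| * rexp (-(L * |x - 1|)) ≤ A / L ^ 2 := by
      rw [← vA]
      exact setIntegral_le_integral iA (Filter.Eventually.of_forall fun x => by positivity)
    calc C1 * (∫ x in Ioi (0:ℝ), |x - 1| * rexp (-(L * |x - 1|))) + 64 / L ^ 2 * B
        ≤ C1 * (A / L ^ 2) + 64 / L ^ 2 * B := by gcongr
      _ = (C1 * A + 64 * B) / L ^ 2 := by ring
      _ ≤ _ := div_le_div_of_nonneg_right (by linarith) (by positivity)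
  · refine (ae_restrict_mem measurableSet_Ioi).mono fun x hx => ?_
    have hx : 0 < x := hx
    have hp : 0 < x ^ (γ - 1) := by positivity
    have hK := auxK_pos L x
    have hE := Real.exp_pos (-(L * |x - 1|))
    have hq := Real.exp_pos (-x / 2)
    simp only [Pi.add_apply, Real.norm_eq_abs, Real.rpow_zero, one_mul]
    -- generic bound
    have gen : |x ^ (γ - 1) - 1| * rexp (-(L * |x - 1|)) ≤
        C1 * (|x - 1| * rexp (-(L * |x - 1|))) +
          64 / L ^ 2 * (x ^ (γ - 1) * rexp (-x / 2) + rexp (-x / 2)) := by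
      rcases le_or_gt |x - 1| (1/2) with h | h
      · have h' := abs_le.mp h
        have := hlip x ⟨by linarith [h'.1], by linarith [h'.2]⟩
        have h0 : 0 ≤ 64 / L ^ 2 * (x ^ (γ - 1) * rexp (-x / 2) + rexp (-x / 2)) := by positivity
        nlinarith
      · have h1 := auxE_le L x hL h.le
        have h2 : |x ^ (γ - 1) - 1| ≤ x ^ (γ - 1) + 1 := by
          rw [abs_le]; constructor <;> linarith
        have h0 : 0 ≤ C1 * (|x - 1| * rexp (-(L * |x - 1|))) := by positivity
        calc |x ^ (γ - 1) - 1| * rexp (-(L * |x - 1|))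
            ≤ (x ^ (γ - 1) + 1) * (64 / L ^ 2 * rexp (-x / 2)) := by gcongr
          _ = 64 / L ^ 2 * (x ^ (γ - 1) * rexp (-x / 2) + rexp (-x / 2)) := by ring
          _ ≤ _ := by linarith
    rcases le_or_gt x 1 with h1 | h1
    · have h2 : x ≤ 2 := by linarith
      rw [indicator_of_mem (by exact h1), indicator_of_mem (by exact h2),
        indicator_of_mem (by exact h1)]
      refine le_trans ?_ gen
      have e : x ^ (γ - 1) * auxK L x - x ^ (γ - 1) - (auxK L x - 1)
        = (x ^ (γ - 1) - 1) * -auxK L (2 - x) := by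
        have := auxK_refl L x
        have : auxK L x = 1 - auxK L (2 - x) := by linarith
        rw [this]; ring
      rw [e, abs_mul, abs_neg, abs_of_pos (auxK_pos L _)]
      gcongr
      refine (auxK_le L _).trans (le_of_eq ?_)
      rw [abs_of_nonpos (by linarith)]
      congr 1; ring
    · have hab : |x - 1| = x - 1 := abs_of_pos (by linarith)
      have n1 : x ∉ Iic (1:ℝ) := by simpa using h1
      rw [indicator_of_notMem n1, indicator_of_notMem n1]
      rcases le_or_gt x 2 with h2 | h2
      · rw [indicator_of_mem (by exact h2)]
        refine le_trans ?_ gen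
        have e : x ^ (γ - 1) * auxK L x - 0 - (auxK L x - 0)
          = (x ^ (γ - 1) - 1) * auxK L x := by ring
        rw [e, abs_mul, abs_of_pos hK, hab]
        gcongr
        exact auxK_le L x
      · have n2 : x ∉ Iic (2:ℝ) := by simpa using h2
        rw [indicator_of_notMem n2, sub_zero, sub_zero, sub_zero, abs_of_pos (by positivity)]
        have h3 := auxE_le L x hL (by rw [hab]; linarith)
        have h4 := auxK_le L x
        rw [← hab] at h4
        have h0 : 0 ≤ C1 * (|x - 1| * rexp (-(L * |x - 1|))) := by positivity
        have h5 : 0 ≤ 64 / L ^ 2 * rexp (-x / 2) := by positivity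
        calc x ^ (γ - 1) * auxK L x ≤ x ^ (γ - 1) * (64 / L ^ 2 * rexp (-x / 2)) := by
              gcongr; exact h4.trans h3
          _ ≤ _ := by linarith

/-- Lemma (Hwang): `Li_γ(−u) = −(log u)^γ/Γ(γ+1)·(1 + O((log u)^{−2}))` as `u → +∞`. -/
theorem negLi_asymptotic (γ : ℝ) (hγ : 0 < γ) :
    ∃ C > (0:ℝ), ∃ u₀ > (1:ℝ), ∀ u : ℝ, u₀ ≤ u →
      |negLi γ u + (Real.log u) ^ γ / Real.Gamma (γ + 1)|
        ≤ C * (Real.log u) ^ (γ - 2) := by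
  obtain ⟨C, hC, h⟩ := aux_main γ hγ
  have hG := Real.Gamma_pos_of_pos hγ
  refine ⟨C / Real.Gamma γ, by positivity, rexp 1, by simp, fun u hu => ?_⟩
  have hu0 : 0 < u := lt_of_lt_of_le (Real.exp_pos 1) hu
  have hL : 1 ≤ Real.log u := by rwa [Real.le_log_iff_exp_le hu0]
  set L := Real.log u with hLdef
  have hL0 : 0 < L := by linarith
  have hI : ∫ t in Set.Ioi (0:ℝ), t ^ (γ - 1) / (Real.exp t / u + 1)
      = L ^ γ * ∫ x in Set.Ioi (0:ℝ), x ^ (γ - 1) * auxK L x := by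
    have h1 := MeasureTheory.integral_comp_mul_left_Ioi
      (fun t : ℝ => t ^ (γ - 1) / (Real.exp t / u + 1)) 0 hL0
    rw [mul_zero, smul_eq_mul] at h1
    have h2 : ∫ x in Set.Ioi (0:ℝ), (L * x) ^ (γ - 1) / (Real.exp (L * x) / u + 1)
        = ∫ x in Set.Ioi (0:ℝ), L ^ (γ - 1) * (x ^ (γ - 1) * auxK L x) := by
      refine MeasureTheory.setIntegral_congr_fun measurableSet_Ioi fun x hx => ?_
      have hx : 0 < x := hx
      have e : Real.exp (L * (x - 1)) = Real.exp (L * x) / u := by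
        rw [mul_sub, Real.exp_sub, mul_one, hLdef, Real.exp_log hu0]
      simp only [auxK, e]
      rw [Real.mul_rpow hL0.le hx.le]
      ring
    rw [h2, MeasureTheory.integral_const_mul, Real.rpow_sub_one hL0.ne'] at h1
    generalize (∫ t in Set.Ioi (0:ℝ), t ^ (γ - 1) / (Real.exp t / u + 1)) = J at h1 ⊢
    field_simp at h1
    linarith
  have e : negLi γ u + L ^ γ / Real.Gamma (γ + 1) =
      -(L ^ γ / Real.Gamma γ) *
        ((∫ x in Set.Ioi (0:ℝ), x ^ (γ - 1) * auxK L x) - 1 / γ) := by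
    rw [negLi, hI, Real.Gamma_add_one hγ.ne']
    field_simp
    ring
  rw [e, abs_mul, abs_neg, abs_of_pos (by positivity)]
  calc _ ≤ L ^ γ / Real.Gamma γ * (C / L ^ 2) := by gcongr; exact h L hL
    _ = _ := by
      rw [Real.rpow_sub hL0, Real.rpow_two]; ring
end
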